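/- arXiv:2208.00794 — 3 statements merged into one kernel-verified Lean document; each statement's English description precedes it below -/
import Mathlib

section
/- Let r ≥ 2 be an integer and λ_0 ∈ [0,1]. Then λ_0 is a jump for r if and only if there exists a finite family 𝓕 of r-graphs satisfying π(𝓕) ≤ λ_0 and λ(F) > λ_0 for all F ∈ 𝓕. -/
/-!
The basic tool is a sampling identity (`sum_weight_card_pullback`): if `ψ : Fin m → V` has
independent values with distribution `x`, the expected number of `r`-subsets of `Fin m` that `ψ` maps
onto an edge of `G` is `C(m, r)` times the Lagrange polynomial of `G` at `x`.

Jump implies family (`finite_family_of_isJump`).  Let `c` witness the jump and let `𝓕` consist of all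
`r`-graphs on `m` vertices with density at least `l + c`.  Uniform weights give
`λ(F) ≥ (l + c) · r! C(m, r) / m^r`, which exceeds `l` for `m` large.  The Turán density exists by
the averaging argument `exNum_succ_mul_le`; were it larger than `l`, the jump property would put a
member of `𝓕` inside large extremal `𝓕`-free graphs.

Family implies jump (`isJump_of_finite_family`).  By finiteness, `λ(F) > l + c` for all `F ∈ 𝓕` and
some `c > 0`.  Let `G` have density at least `l + ε` on `n` vertices, `n` large, and fix `M` with
`ex(M, 𝓕) < (l + ε/4) C(M, r)`.  Sampling with uniform weights shows that a positive proportion of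
the maps `Fin M → Fin n` are injective and pull `G` back to an `r`-graph with more than `ex(M, 𝓕)`
edges; by pigeonhole the pullback is a fixed `Q` for a positive proportion of them
(`exists_common_pullback`), and `Q` contains some `F ∈ 𝓕`.  Erdős's box theorem (`exists_box`) then
produces a blow-up of `Q`, hence of `F`, in `G` with `m` copies of each vertex.  Sampling `m` vertices
of `F` with weights `x` where the Lagrange polynomial exceeds `l + c`, and using the `i`-th copy for
the `i`-th sample, gives an `m`-vertex subgraph of `G` of density at least `l + c`
(`exists_pullback_card_ge`, `exists_subgraph_of_box`).
-/

open Filter Topology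

noncomputable section

/-- The Lagrange polynomial `λ_𝓔` of a family `E` of `r`-multisets on the index type `ι`:
`λ_𝓔(x) = r! · ∑_{E ∈ 𝓔} ∏_i x_i^{E(i)} / E(i)!`. -/
def lagrangePoly {ι : Type} [Fintype ι] [DecidableEq ι]
    (r : ℕ) (E : Finset (Multiset ι)) (x : ι → ℝ) : ℝ :=
  (Nat.factorial r : ℝ) *
    ∑ e ∈ E, ∏ i, x i ^ (Multiset.count i e) / ((Multiset.count i e).factorial : ℝ)

/-- The Lagrangian `λ(P)` of a pattern `P = (ι, E)`: the maximum of the Lagrange polynomial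
over the standard simplex. -/
def patternLagrangian {ι : Type} [Fintype ι] [DecidableEq ι]
    (r : ℕ) (E : Finset (Multiset ι)) : ℝ :=
  sSup (lagrangePoly r E '' stdSimplex ℝ ι)

/-- The family `𝓔[S]` of the induced subpattern `P[S]`, consisting of those multisets of `E`
all of whose elements lie in `S`, relabelled as multisets on the subtype `{i // i ∈ S}`. -/
def subFamily {ι : Type} [DecidableEq ι] (E : Finset (Multiset ι)) (S : Finset ι) :
    Finset (Multiset {i : ι // i ∈ S}) := by
  classical
  exact (E.filter (fun e => ∀ i ∈ e, i ∈ S)).image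
    (fun e => Multiset.filterMap
      (fun i => if h : i ∈ S then some (⟨i, h⟩ : {i : ι // i ∈ S}) else none) e)

/-- A pattern is minimal if removing any index strictly decreases the Lagrangian.
(`P - i` is exactly the induced subpattern on `univ.erase i`.) -/
def IsMinimalPattern {ι : Type} [Fintype ι] [DecidableEq ι] (r : ℕ)
    (E : Finset (Multiset ι)) : Prop :=
  ∀ i : ι, patternLagrangian r (subFamily E (Finset.univ.erase i)) < patternLagrangian r E

/-- Index set of the union `P₁ ⊕_i P₂`: index `i` of `ι₁` is replaced by a copy of `ι₂`. -/
abbrev unionIndex (ι₁ ι₂ : Type) (i : ι₁) : Type := {j : ι₁ // j ≠ i} ⊕ ι₂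

/-- Projection of the union index set back to `ι₁` (collapsing the copy of `ι₂` to `i`). -/
def unionProj {ι₁ ι₂ : Type} (i : ι₁) : unionIndex ι₁ ι₂ i → ι₁ :=
  Sum.elim (fun j => j.1) (fun _ => i)

/-- The family `𝓔̂` of the union `P₁ ⊕_i P₂`: an `r`-multiset on the new index set belongs to
`𝓔̂` iff its projection to `ι₁` belongs to `E₁` (cases (b),(c)), or it is a copy of a member
of `E₂` lying inside the copy of `ι₂` (case (a)). -/
def unionFamily {ι₁ ι₂ : Type} [Fintype ι₁] [Fintype ι₂] [DecidableEq ι₁] [DecidableEq ι₂]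
    (r : ℕ) (E₁ : Finset (Multiset ι₁)) (E₂ : Finset (Multiset ι₂)) (i : ι₁) :
    Finset (Multiset (unionIndex ι₁ ι₂ i)) := by
  classical
  exact Finset.image (fun R : Sym (unionIndex ι₁ ι₂ i) r => (R : Multiset (unionIndex ι₁ ι₂ i)))
    ((Finset.univ.sym r).filter
      (fun R : Sym (unionIndex ι₁ ι₂ i) r =>
        Multiset.map (unionProj i) (R : Multiset (unionIndex ι₁ ι₂ i)) ∈ E₁ ∨
        ∃ e ∈ E₂, (R : Multiset (unionIndex ι₁ ι₂ i)) = Multiset.map Sum.inr e))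

/-- Index set of the union `P₁ ⊕_T P₂`: each index of `T` is replaced by a copy of `ι₂`. -/
abbrev unionIndexT (ι₁ ι₂ : Type) (T : Finset ι₁) : Type :=
  {j : ι₁ // j ∉ T} ⊕ ({j : ι₁ // j ∈ T} × ι₂)

/-- Projection of the union index set back to `ι₁`. -/
def unionProjT {ι₁ ι₂ : Type} (T : Finset ι₁) : unionIndexT ι₁ ι₂ T → ι₁ :=
  Sum.elim (fun j => j.1) (fun p => p.1.1)

/-- The family `𝓔̂` of the union `P₁ ⊕_T P₂`. -/
def unionFamilyT {ι₁ ι₂ : Type} [Fintype ι₁] [Fintype ι₂] [DecidableEq ι₁] [DecidableEq ι₂]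
    (r : ℕ) (E₁ : Finset (Multiset ι₁)) (E₂ : Finset (Multiset ι₂)) (T : Finset ι₁) :
    Finset (Multiset (unionIndexT ι₁ ι₂ T)) := by
  classical
  exact Finset.image (fun R : Sym (unionIndexT ι₁ ι₂ T) r => (R : Multiset (unionIndexT ι₁ ι₂ T)))
    ((Finset.univ.sym r).filter
      (fun R : Sym (unionIndexT ι₁ ι₂ T) r =>
        Multiset.map (unionProjT T) (R : Multiset (unionIndexT ι₁ ι₂ T)) ∈ E₁ ∨
        ∃ i : {j : ι₁ // j ∈ T}, ∃ e ∈ E₂,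
          (R : Multiset (unionIndexT ι₁ ι₂ T)) = Multiset.map (fun k => Sum.inr (i, k)) e))

/-- The pattern `P_G` associated with an `r`-graph `G`: its multisets are the edges of `G`. -/
def graphPattern {V : Type} [DecidableEq V] (G : Finset (Finset V)) : Finset (Multiset V) :=
  G.image Finset.val

/-- The Lagrangian `λ(G)` of an `r`-graph `G`. -/
def graphLagrangian {V : Type} [Fintype V] [DecidableEq V] (r : ℕ) (G : Finset (Finset V)) : ℝ :=
  patternLagrangian r (graphPattern G)

/-- `α` is a jump for `r`. -/
def IsJump (r : ℕ) (α : ℝ) : Prop :=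
  ∃ c : ℝ, 0 < c ∧ ∀ ε : ℝ, 0 < ε → ∀ m : ℕ, r ≤ m → ∃ n₀ : ℕ, ∀ n : ℕ, n₀ ≤ n →
    ∀ G : Finset (Finset (Fin n)), (∀ e ∈ G, e.card = r) →
      α + ε ≤ (G.card : ℝ) / (n.choose r : ℝ) →
      ∃ W : Finset (Fin n), W.card = m ∧ ∃ H ⊆ G, (∀ e ∈ H, e ⊆ W) ∧
        α + c ≤ (H.card : ℝ) / (m.choose r : ℝ)

/-- `G` contains a copy of `F` as a subgraph. -/
def GraphContains {n k : ℕ} (G : Finset (Finset (Fin n))) (F : Finset (Finset (Fin k))) : Prop :=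
  ∃ φ : Fin k → Fin n, Function.Injective φ ∧ ∀ e ∈ F, e.image φ ∈ G

/-- The Turán number `ex(n, 𝓕)` for a family `𝓕` of graphs, among `r`-uniform hosts. -/
def exNum (r n : ℕ) (𝓕 : Set (Σ k : ℕ, Finset (Finset (Fin k)))) : ℕ :=
  sSup {c : ℕ | ∃ G : Finset (Finset (Fin n)), (∀ e ∈ G, e.card = r) ∧
    (∀ F ∈ 𝓕, ¬ GraphContains G F.2) ∧ G.card = c}

/-- `Π_∞^{(r)}`: the set of Turán densities of (possibly infinite) families of `r`-graphs. -/
def turanDensitySet (r : ℕ) : Set ℝ :=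
  {x | ∃ 𝓕 : Set (Σ k : ℕ, Finset (Finset (Fin k))),
    (∀ F ∈ 𝓕, ∀ e ∈ F.2, e.card = r) ∧
    Tendsto (fun n => (exNum r n 𝓕 : ℝ) / (n.choose r : ℝ)) atTop (nhds x)}

/-- `Λ^{(r)}`: the set of Lagrangians of `r`-graphs. -/
def lambdaSet (r : ℕ) : Set ℝ :=
  {x | ∃ (n : ℕ) (G : Finset (Finset (Fin n))), (∀ e ∈ G, e.card = r) ∧ graphLagrangian r G = x}

/-- The tail `(P_t)_{t ≥ t₀}` of a sequence of patterns is a `(k, l)`-sequence. -/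
def IsKLambdaSeqFrom (r k t₀ : ℕ) (l : ℝ) (ι : ℕ → Type)
    [∀ t, Fintype (ι t)] [∀ t, DecidableEq (ι t)]
    (𝓔 : ∀ t, Finset (Multiset (ι t))) : Prop :=
  ∃ ε : ℕ → ℝ,
    (∀ t, t₀ ≤ t → 0 < ε t) ∧
    Tendsto (fun t => patternLagrangian r (𝓔 t)) atTop (nhds l) ∧
    (∀ t, t₀ ≤ t → l + ε t ≤ patternLagrangian r (𝓔 t)) ∧
    (∀ t, t₀ ≤ t → ∀ S : Finset (ι t), S.card = k →
      patternLagrangian r (subFamily (𝓔 t) S) ≤ l)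

/-- A `(k, l)`-sequence of patterns. -/
def IsKLambdaSeq (r k : ℕ) (l : ℝ) (ι : ℕ → Type)
    [∀ t, Fintype (ι t)] [∀ t, DecidableEq (ι t)]
    (𝓔 : ∀ t, Finset (Multiset (ι t))) : Prop :=
  IsKLambdaSeqFrom r k 0 l ι 𝓔

/-- A non-jump sequence of patterns on `l`: for every `k > 0` some tail is a
`(k, l)`-sequence. -/
def IsNonJumpSeq (r : ℕ) (l : ℝ) (ι : ℕ → Type)
    [∀ t, Fintype (ι t)] [∀ t, DecidableEq (ι t)]
    (𝓔 : ∀ t, Finset (Multiset (ι t))) : Prop :=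
  ∀ k : ℕ, 0 < k → ∃ t₀ : ℕ, IsKLambdaSeqFrom r k t₀ l ι 𝓔

/-- The family of all `r`-multisets on `Fin m` except the `m` constant ones. -/
def allButConstant (m r : ℕ) : Finset (Multiset (Fin m)) := by
  classical
  exact ((Finset.univ.sym r).image (fun s : Sym (Fin m) r => (s : Multiset (Fin m)))).filter
    (fun e => ¬ ∃ i : Fin m, e = Multiset.replicate r i)

end

/-! ### Boxes in dense sets of tuples -/

lemma tendsto_factorial_mul_choose_div_pow (r : ℕ) :
    Tendsto (fun n : ℕ => (r.factorial : ℝ) * (n.choose r : ℝ) / (n : ℝ) ^ r) atTop (𝓝 1) := by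
  have h := isEquivalent_descFactorial r
  rw [Asymptotics.isEquivalent_iff_tendsto_one] at h
  · refine h.congr fun n => ?_
    simp [Nat.descFactorial_eq_factorial_mul_choose]
  · filter_upwards [eventually_gt_atTop 0] with n hn
    positivity

lemma card_not_injective_mul_le (Ω : Type) [Fintype Ω] [DecidableEq Ω] (t : ℕ) :
    (Finset.univ.filter fun a : Fin t → Ω => ¬ Function.Injective a).card * Fintype.card Ω
      ≤ t ^ 2 * Fintype.card Ω ^ t := by
  classical
  have hsub : (Finset.univ.filter fun a : Fin t → Ω => ¬ Function.Injective a) ⊆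
      (Finset.univ : Finset (Fin t × Fin t)).biUnion fun p =>
        Finset.univ.filter fun a : Fin t → Ω => p.1 ≠ p.2 ∧ a p.1 = a p.2 := by
    intro a ha
    obtain ⟨i, j, hij, hne⟩ := Function.not_injective_iff.mp (Finset.mem_filter.mp ha).2
    simp only [Finset.mem_biUnion, Finset.mem_filter, Finset.mem_univ, true_and]
    exact ⟨(i, j), hne, hij⟩
  have hpair : ∀ p : Fin t × Fin t,
      (Finset.univ.filter fun a : Fin t → Ω => p.1 ≠ p.2 ∧ a p.1 = a p.2).card * Fintype.card Ω
        ≤ Fintype.card Ω ^ t := by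
    rintro ⟨i, j⟩
    have hmap := Finset.card_le_card_of_injOn (s := (Finset.univ.filter
        fun a : Fin t → Ω => i ≠ j ∧ a i = a j) ×ˢ (Finset.univ : Finset Ω))
      (t := (Finset.univ : Finset (Fin t → Ω)))
      (fun q => Function.update q.1 i q.2) (fun _ _ => Finset.mem_univ _) ?_
    · simpa [Finset.card_product] using hmap
    -- `a` is recovered from `update a i v` since `a i = a j`, and `v` is its value at `i`.
    · rintro ⟨a, v⟩ ha ⟨b, w⟩ hb hab
      simp only [Finset.coe_product, Set.mem_prod, Finset.mem_coe, Finset.mem_filter,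
        Finset.mem_univ, true_and, and_true] at ha hb hab
      have hv : v = w := by simpa using congrFun hab i
      have hother : ∀ x, x ≠ i → a x = b x := by
        intro x hx
        simpa [Function.update_of_ne hx] using congrFun hab x
      have : a = b := by
        funext x
        by_cases hx : x = i
        · subst hx
          rw [ha.2, hb.2, hother j (Ne.symm ha.1)]
        · exact hother x hx
      rw [this, hv]
  calc _ ≤ (∑ p : Fin t × Fin t, (Finset.univ.filter
            fun a : Fin t → Ω => p.1 ≠ p.2 ∧ a p.1 = a p.2).card) * Fintype.card Ω :=
        Nat.mul_le_mul_right _ ((Finset.card_le_card hsub).trans Finset.card_biUnion_le)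
    _ ≤ ∑ _p : Fin t × Fin t, Fintype.card Ω ^ t := by
        rw [Finset.sum_mul]
        exact Finset.sum_le_sum fun p _ => hpair p
    _ = t ^ 2 * Fintype.card Ω ^ t := by simp [sq]

/-- Dependent random choice in its simplest form: a bipartite relation of density `δ` has a
`t`-tuple of distinct elements on the left whose common neighbourhood on the right has density at
least `δ^t / 2`.  The average of the density of the common neighbourhood over all `t`-tuples is at
least `δ^t` by convexity, and the tuples with repetitions are negligible. -/
lemma exists_injective_common_neighbours {Ω X : Type} [Fintype Ω] [DecidableEq Ω] [Fintype X]
    [Nonempty X] (R : Ω → X → Prop) (t : ℕ) (δ : ℝ) (hδ : 0 < δ)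
    (hΩ : 2 * (t : ℝ) ^ 2 < δ ^ t * Fintype.card Ω)
    (hR : δ * Fintype.card Ω * Fintype.card X ≤
      ∑ x : X, (Nat.card {a : Ω // R a x} : ℝ)) :
    ∃ a : Fin t → Ω, Function.Injective a ∧
      δ ^ t / 2 * Fintype.card X ≤ (Nat.card {x : X // ∀ j, R (a j) x} : ℝ) := by
  classical
  by_contra hcon
  push Not at hcon
  set N : ℝ := (Fintype.card Ω : ℝ) with hN
  set K : ℝ := (Fintype.card X : ℝ) with hK
  have hKpos : 0 < K := by simp [hK, Fintype.card_pos]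
  have hNpos : 0 < N := by
    by_contra h
    have h0 : N = 0 := le_antisymm (not_lt.mp h) (by positivity)
    rw [h0] at hΩ
    nlinarith [sq_nonneg (t : ℝ)]
  have hdouble : ∑ a : Fin t → Ω, (Nat.card {x : X // ∀ j, R (a j) x} : ℝ) =
      ∑ x : X, (Nat.card {a : Ω // R a x} : ℝ) ^ t := by
    have h1 : ∀ x : X, Nat.card {a : Ω // R a x} ^ t =
        (Finset.univ.filter fun a : Fin t → Ω => ∀ j, R (a j) x).card := by
      intro x
      have : (Finset.univ.filter fun a : Fin t → Ω => ∀ j, R (a j) x) =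
          Fintype.piFinset fun _ : Fin t => Finset.univ.filter fun a : Ω => R a x := by
        ext a; simp
      rw [this, Fintype.card_piFinset_const, Nat.card_eq_fintype_card, Fintype.card_subtype]
    have h2 : ∀ a : Fin t → Ω, Nat.card {x : X // ∀ j, R (a j) x} =
        (Finset.univ.filter fun x : X => ∀ j, R (a j) x).card := by
      intro a
      rw [Nat.card_eq_fintype_card, Fintype.card_subtype]
    have := Finset.sum_card_bipartiteAbove_eq_sum_card_bipartiteBelow
      (s := (Finset.univ : Finset (Fin t → Ω))) (t := (Finset.univ : Finset X))
      (fun a x => ∀ j, R (a j) x)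
    simp only [Finset.bipartiteAbove, Finset.bipartiteBelow] at this
    simp only [← Nat.cast_pow, h1, h2]
    exact_mod_cast this
  have hjensen : K * (δ * N) ^ t ≤ ∑ x : X, (Nat.card {a : Ω // R a x} : ℝ) ^ t := by
    have h := Real.pow_arith_mean_le_arith_mean_pow (Finset.univ : Finset X) (fun _ => K⁻¹)
      (fun x => (Nat.card {a : Ω // R a x} : ℝ)) (fun _ _ => by positivity)
      (by simp [hK]) (fun _ _ => by positivity) t
    rw [← Finset.mul_sum, ← Finset.mul_sum] at h
    have h3 : δ * N ≤ K⁻¹ * ∑ x : X, (Nat.card {a : Ω // R a x} : ℝ) := by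
      rw [le_inv_mul_iff₀ hKpos]; linarith
    have h4 := (pow_le_pow_left₀ (by positivity) h3 t).trans h
    rwa [le_inv_mul_iff₀ hKpos] at h4
  have hninj : ((Finset.univ.filter fun a : Fin t → Ω => ¬ Function.Injective a).card : ℝ) * N
      ≤ (t : ℝ) ^ 2 * N ^ t := by
    rw [hN]
    exact_mod_cast card_not_injective_mul_le Ω t
  have hupper : ∑ a : Fin t → Ω, (Nat.card {x : X // ∀ j, R (a j) x} : ℝ) ≤
      N ^ t * (δ ^ t / 2 * K) +
      ((Finset.univ.filter fun a : Fin t → Ω => ¬ Function.Injective a).card : ℝ) * K := by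
    have hterm : ∀ a : Fin t → Ω, (Nat.card {x : X // ∀ j, R (a j) x} : ℝ) ≤
        δ ^ t / 2 * K + (if ¬ Function.Injective a then 1 else 0) * K := by
      intro a
      by_cases ha : Function.Injective a
      · simpa [ha] using (hcon a ha).le
      · have hle : (Nat.card {x : X // ∀ j, R (a j) x} : ℝ) ≤ K := by
          rw [hK, Nat.card_eq_fintype_card]
          exact_mod_cast Fintype.card_subtype_le _
        simp only [ha, not_false_eq_true, if_true, one_mul]
        have : 0 ≤ δ ^ t / 2 * K := by positivity
        linarith
    refine (Finset.sum_le_sum fun a _ => hterm a).trans (le_of_eq ?_)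
    rw [Finset.sum_add_distrib, ← Finset.sum_mul _ _ K, ← Finset.sum_mul _ _ K, Finset.sum_boole]
    simp [hN]
    ring
  rw [hdouble] at hupper
  have h5 := hjensen.trans hupper
  rw [mul_pow] at h5
  have h6 : δ ^ t / 2 * N ^ t ≤
      ((Finset.univ.filter fun a : Fin t → Ω => ¬ Function.Injective a).card : ℝ) := by
    have : K * (δ ^ t / 2 * N ^ t) ≤
      K * ((Finset.univ.filter fun a : Fin t → Ω => ¬ Function.Injective a).card : ℝ) := by
      linarith
    exact le_of_mul_le_mul_left this hKpos
  have h7 : δ ^ t / 2 * N ^ t * N ≤ (t : ℝ) ^ 2 * N ^ t :=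
    (mul_le_mul_of_nonneg_right h6 hNpos.le).trans hninj
  have h8 : N ^ t * (2 * (t : ℝ) ^ 2) < N ^ t * (δ ^ t * N) :=
    mul_lt_mul_of_pos_left hΩ (by positivity)
  linarith

/-- Erdős's box theorem: a set of `M`-tuples of positive density in `(Fin n)^M`, with `n` large,
contains a combinatorial box with sides of size `t`. -/
lemma exists_box (t : ℕ) : ∀ (M : ℕ) (δ : ℝ), 0 < δ → ∃ n₀ : ℕ, ∀ n : ℕ, n₀ ≤ n →
    ∀ S : Finset (Fin M → Fin n), δ * (n : ℝ) ^ M ≤ (S.card : ℝ) →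
      ∃ A : Fin M → Fin t → Fin n, (∀ v, Function.Injective (A v)) ∧
        ∀ g : Fin M → Fin t, (fun v => A v (g v)) ∈ S := by
  classical
  intro M
  induction M with
  | zero =>
    intro δ hδ
    refine ⟨0, fun n _ S hS => ⟨fun v => v.elim0, fun v => v.elim0, fun g => ?_⟩⟩
    have : 0 < S.card := by
      rw [← Nat.cast_pos (α := ℝ)]
      simp only [pow_zero, mul_one] at hS
      linarith
    obtain ⟨s, hs⟩ := Finset.card_pos.mp this
    rwa [Subsingleton.elim (fun v => _) s]
  | succ M ih =>
    intro δ hδ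
    obtain ⟨n₁, hn₁⟩ := ih (δ ^ t / 2) (by positivity)
    obtain ⟨n₂, hn₂⟩ := exists_nat_gt (2 * (t : ℝ) ^ 2 / δ ^ t)
    refine ⟨max n₁ (max n₂ 1), fun n hn S hS => ?_⟩
    have hnn₁ : n₁ ≤ n := le_trans (le_max_left _ _) hn
    have hnn₂ : n₂ ≤ n := le_trans (le_trans (le_max_left _ _) (le_max_right _ _)) hn
    have hn1 : 1 ≤ n := le_trans (le_trans (le_max_right _ _) (le_max_right _ _)) hn
    have : Nonempty (Fin n) := ⟨⟨0, hn1⟩⟩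
    obtain ⟨a, hainj, ha⟩ := exists_injective_common_neighbours
      (Ω := Fin n) (X := Fin M → Fin n) (fun a x => Fin.cons a x ∈ S) t δ hδ
      (by
        have : (n₂ : ℝ) ≤ n := by exact_mod_cast hnn₂
        rw [div_lt_iff₀ (by positivity)] at hn₂
        rw [Fintype.card_fin]
        nlinarith [pow_pos hδ t])
      (by
        have hcard : S.card = ∑ x : Fin M → Fin n,
            Nat.card {a : Fin n // (Fin.cons a x : Fin (M + 1) → Fin n) ∈ S} := by
          rw [Finset.card_eq_sum_card_fiberwise (f := fun s : Fin (M + 1) → Fin n => Fin.tail s)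
            (t := Finset.univ) (fun _ _ => Finset.mem_coe.mpr (Finset.mem_univ _))]
          refine Finset.sum_congr rfl fun x _ => ?_
          rw [Nat.card_eq_fintype_card, Fintype.card_subtype]
          symm
          refine Finset.card_bij (fun a _ => Fin.cons a x) ?_ ?_ ?_
          · intro a ha
            simpa using ha
          · intro a _ b _ hab
            simpa using congrFun hab 0
          · intro s hs
            simp only [Finset.mem_filter] at hs
            refine ⟨s 0, ?_, ?_⟩
            · simp [← hs.2, Fin.cons_self_tail, hs.1]
            · simp [← hs.2, Fin.cons_self_tail]
        have : (S.card : ℝ) = ∑ x : Fin M → Fin n,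
            (Nat.card {a : Fin n // (Fin.cons a x : Fin (M + 1) → Fin n) ∈ S} : ℝ) := by
          exact_mod_cast hcard
        rw [← this]
        simp only [Fintype.card_fin, Fintype.card_pi, Finset.prod_const, Finset.card_univ,
          Nat.cast_pow]
        calc _ = δ * (n : ℝ) ^ (M + 1) := by ring
          _ ≤ _ := hS)
    obtain ⟨A, hA, hbox⟩ := hn₁ n hnn₁
      (Finset.univ.filter fun x : Fin M → Fin n => ∀ j, (Fin.cons (a j) x : Fin (M+1) → Fin n) ∈ S)
      (by
        rw [Nat.card_eq_fintype_card, Fintype.card_subtype] at ha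
        simpa using ha)
    refine ⟨Fin.cons a A, ?_, ?_⟩
    · intro v
      refine Fin.cases ?_ (fun v => ?_) v
      · simpa using hainj
      · simpa using hA v
    · intro g
      have h := hbox (fun v => g v.succ)
      simp only [Finset.mem_filter, Finset.mem_univ, true_and] at h
      convert h (g 0) using 1
      funext v
      refine Fin.cases ?_ (fun v => ?_) v <;> simp

/-! ### Random sampling and the Lagrangian -/

/-- The `r`-graph on `Fin m` pulled back from `G` along `ψ`: its edges are the `r`-sets mapped onto
an edge of `G`.  When `G` is `r`-uniform, `ψ` is injective on each of them. -/
def pullback {V : Type} [DecidableEq V] (r : ℕ) {m : ℕ} (G : Finset (Finset V)) (ψ : Fin m → V) :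
    Finset (Finset (Fin m)) :=
  (Finset.powersetCard r Finset.univ).filter fun e => e.image ψ ∈ G

lemma mem_pullback {V : Type} [DecidableEq V] {r m : ℕ} {G : Finset (Finset V)} {ψ : Fin m → V}
    {e : Finset (Fin m)} : e ∈ pullback r G ψ ↔ e.card = r ∧ e.image ψ ∈ G := by
  simp [pullback, Finset.mem_powersetCard]

lemma card_pullback_le {V : Type} [DecidableEq V] {r m : ℕ} (G : Finset (Finset V))
    (ψ : Fin m → V) : (pullback r G ψ).card ≤ m.choose r := by
  refine (Finset.card_filter_le _ _).trans ?_
  simp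

lemma lagrangePoly_graphPattern {V : Type} [Fintype V] [DecidableEq V] (r : ℕ)
    (G : Finset (Finset V)) (x : V → ℝ) :
    lagrangePoly r (graphPattern G) x = (r.factorial : ℝ) * ∑ e ∈ G, ∏ v ∈ e, x v := by
  unfold lagrangePoly graphPattern
  rw [Finset.sum_image (fun a _ b _ h => Finset.val_injective h)]
  congr 1
  refine Finset.sum_congr rfl fun e _ => ?_
  rw [← Finset.prod_subset (Finset.subset_univ e)]
  · refine Finset.prod_congr rfl fun v hv => ?_
    rw [Multiset.count_eq_one_of_mem e.nodup hv]
    simp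
  · intro v _ hv
    rw [Multiset.count_eq_zero_of_notMem hv]
    simp

/-- If the `ψ i` are chosen independently with distribution `x`, the set `s` is mapped onto `g` with
probability `r! ∏_{v ∈ g} x v`: there are `r!` bijections `s ≃ g`, each realised with probability
`∏_{v ∈ g} x v`. -/
lemma sum_prod_image_eq {V : Type} [Fintype V] [DecidableEq V] {r m : ℕ} (x : V → ℝ)
    (hx : ∑ v, x v = 1) (s : Finset (Fin m)) (g : Finset V) (hs : s.card = r) (hg : g.card = r) :
    ∑ ψ ∈ Finset.univ.filter (fun ψ : Fin m → V => s.image ψ = g), ∏ i, x (ψ i) =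
      (r.factorial : ℝ) * ∏ v ∈ g, x v := by
  classical
  -- The functions `ψ` extending a given bijection `σ` form a product set.
  let T : (s ≃ g) → Finset (Fin m → V) := fun σ =>
    Fintype.piFinset fun i => if h : i ∈ s then {(σ ⟨i, h⟩ : V)} else Finset.univ
  have hT : ∀ σ ψ, ψ ∈ T σ ↔ ∀ i (h : i ∈ s), ψ i = σ ⟨i, h⟩ := by
    intro σ ψ
    simp only [T, Fintype.mem_piFinset]
    refine forall_congr' fun i => ?_
    by_cases h : i ∈ s <;> simp [h]
  have hunion : Finset.univ.filter (fun ψ : Fin m → V => s.image ψ = g) =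
      Finset.univ.biUnion T := by
    ext ψ
    simp only [Finset.mem_filter, Finset.mem_univ, true_and, Finset.mem_biUnion, hT]
    constructor
    · intro h
      have hinj : Set.InjOn ψ s := by
        apply Finset.card_image_iff.mp
        rw [h, hs, hg]
      have hb : Set.BijOn ψ s g := by
        have := hinj.bijOn_image
        rwa [← Finset.coe_image, h] at this
      exact ⟨hb.equiv ψ, fun i hi => rfl⟩
    · rintro ⟨σ, hσ⟩
      ext v
      simp only [Finset.mem_image]
      constructor
      · rintro ⟨i, hi, rfl⟩
        rw [hσ i hi]
        exact (σ ⟨i, hi⟩).2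
      · intro hv
        refine ⟨σ.symm ⟨v, hv⟩, (σ.symm ⟨v, hv⟩).2, ?_⟩
        rw [hσ _ (σ.symm ⟨v, hv⟩).2]
        simp
  have hdisj : ((Finset.univ : Finset (s ≃ g)) : Set (s ≃ g)).PairwiseDisjoint T := by
    intro σ _ τ _ hne
    rw [Function.onFun, Finset.disjoint_left]
    intro ψ h1 h2
    apply hne
    ext i
    rw [← (hT σ ψ).mp h1 i i.2, ← (hT τ ψ).mp h2 i i.2]
  have hsum : ∀ σ : s ≃ g, ∑ ψ ∈ T σ, ∏ i, x (ψ i) = ∏ v ∈ g, x v := by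
    intro σ
    rw [← Finset.prod_univ_sum (fun i => if h : i ∈ s then {(σ ⟨i, h⟩ : V)} else Finset.univ)
      (fun _ v => x v)]
    rw [← Finset.prod_subset (Finset.subset_univ s), ← Finset.prod_coe_sort s,
      ← Finset.prod_coe_sort g]
    · rw [← Equiv.prod_comp σ]
      refine Finset.prod_congr rfl fun i _ => ?_
      simp
    · intro i _ hi
      simp [hi, hx]
  rw [hunion, Finset.sum_biUnion hdisj, Finset.sum_congr rfl fun σ _ => hsum σ]
  have hcard : Fintype.card (s ≃ g) = r.factorial := by
    rw [Fintype.card_equiv (Fintype.equivOfCardEq (by simp [hs, hg]))]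
    simp [hs]
  simp [hcard]

/-- The expected number of edges of the pullback of `G` along a random `ψ : Fin m → V` whose values
are independent with distribution `x` is `C(m, r)` times the Lagrange polynomial of `G` at `x`. -/
lemma sum_weight_card_pullback {V : Type} [Fintype V] [DecidableEq V] {r : ℕ} (m : ℕ)
    (G : Finset (Finset V)) (hG : ∀ e ∈ G, e.card = r) (x : V → ℝ) (hx : ∑ v, x v = 1) :
    ∑ ψ : Fin m → V, (∏ i, x (ψ i)) * ((pullback r G ψ).card : ℝ) =
      (m.choose r : ℝ) * lagrangePoly r (graphPattern G) x := by
  classical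
  rw [lagrangePoly_graphPattern]
  have h1 : ∀ ψ : Fin m → V, ((pullback r G ψ).card : ℝ) =
      ∑ s ∈ Finset.powersetCard r (Finset.univ : Finset (Fin m)),
        ∑ g ∈ G, if s.image ψ = g then 1 else 0 := by
    intro ψ
    rw [pullback, Finset.card_filter]
    push_cast
    refine Finset.sum_congr rfl fun s _ => ?_
    rw [Finset.sum_ite_eq]
  simp_rw [h1, Finset.mul_sum]
  rw [Finset.sum_comm]
  have h2 : ∀ s ∈ Finset.powersetCard r (Finset.univ : Finset (Fin m)),
      ∑ ψ : Fin m → V, ∑ g ∈ G, (∏ i, x (ψ i)) * (if s.image ψ = g then 1 else 0) =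
        ∑ g ∈ G, (r.factorial : ℝ) * ∏ v ∈ g, x v := by
    intro s hs
    rw [Finset.sum_comm]
    refine Finset.sum_congr rfl fun g hg => ?_
    rw [← sum_prod_image_eq x hx s g (Finset.mem_powersetCard.mp hs).2 (hG g hg),
      Finset.sum_filter]
    refine Finset.sum_congr rfl fun ψ _ => ?_
    split_ifs <;> simp
  rw [Finset.sum_congr rfl h2, Finset.sum_const, Finset.card_powersetCard]
  simp [Finset.mul_sum]

lemma lagrangePoly_graphPattern_uniform {n r : ℕ} (G : Finset (Finset (Fin n)))
    (hG : ∀ e ∈ G, e.card = r) :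
    lagrangePoly r (graphPattern G) (fun _ => (n : ℝ)⁻¹) =
      (r.factorial : ℝ) * G.card / (n : ℝ) ^ r := by
  rw [lagrangePoly_graphPattern, Finset.sum_congr rfl
    (fun e he => by rw [Finset.prod_const, hG e he] : ∀ e ∈ G, _ = ((n : ℝ)⁻¹) ^ r)]
  simp
  ring

lemma le_graphLagrangian {n r : ℕ} (hn : 0 < n) (G : Finset (Finset (Fin n)))
    (hG : ∀ e ∈ G, e.card = r) :
    (r.factorial : ℝ) * G.card / (n : ℝ) ^ r ≤ graphLagrangian r G := by
  rw [← lagrangePoly_graphPattern_uniform G hG]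
  refine le_csSup ?_ ⟨_, ⟨fun _ => by positivity, by simp [hn.ne']⟩, rfl⟩
  refine ((isCompact_stdSimplex ℝ (Fin n)).image ?_).bddAbove
  unfold lagrangePoly
  fun_prop

/-- Some `f : Fin m → Fin k` pulls `F` back to an `r`-graph of density at least the value of the
Lagrange polynomial at any given point of the simplex. -/
lemma exists_pullback_card_ge {k r : ℕ} (m : ℕ) (F : Finset (Finset (Fin k)))
    (hF : ∀ e ∈ F, e.card = r) (x : Fin k → ℝ) (hx : x ∈ stdSimplex ℝ (Fin k)) :
    ∃ f : Fin m → Fin k, (m.choose r : ℝ) * lagrangePoly r (graphPattern F) x ≤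
      ((pullback r F f).card : ℝ) := by
  by_contra hcon
  push Not at hcon
  have hexp := sum_weight_card_pullback m F hF x hx.2
  have htot : ∑ ψ : Fin m → Fin k, ∏ i, x (ψ i) = 1 := by
    have := Finset.prod_univ_sum (fun _ : Fin m => (Finset.univ : Finset (Fin k))) (fun _ v => x v)
    rw [Fintype.piFinset_univ] at this
    rw [← this]
    simp [hx.2]
  have hnn : ∀ ψ : Fin m → Fin k, 0 ≤ ∏ i, x (ψ i) :=
    fun ψ => Finset.prod_nonneg fun i _ => hx.1 _
  obtain ⟨ψ₀, -, hψ₀⟩ : ∃ ψ ∈ (Finset.univ : Finset (Fin m → Fin k)), 0 < ∏ i, x (ψ i) := by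
    by_contra h
    push Not at h
    have := Finset.sum_nonpos h
    linarith
  have hlt : ∑ ψ : Fin m → Fin k, (∏ i, x (ψ i)) * ((pullback r F ψ).card : ℝ) <
      ∑ ψ : Fin m → Fin k, (∏ i, x (ψ i)) *
        ((m.choose r : ℝ) * lagrangePoly r (graphPattern F) x) :=
    Finset.sum_lt_sum (fun ψ _ => mul_le_mul_of_nonneg_left (hcon ψ).le (hnn ψ))
      ⟨ψ₀, Finset.mem_univ _, mul_lt_mul_of_pos_left (hcon ψ₀) hψ₀⟩
  rw [← Finset.sum_mul, htot, one_mul, hexp] at hlt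
  exact lt_irrefl _ hlt

/-! ### Turán numbers -/

lemma bddAbove_exNum_set (r n : ℕ) (𝓕 : Set (Σ k : ℕ, Finset (Finset (Fin k)))) :
    BddAbove {c : ℕ | ∃ G : Finset (Finset (Fin n)), (∀ e ∈ G, e.card = r) ∧
      (∀ F ∈ 𝓕, ¬ GraphContains G F.2) ∧ G.card = c} := by
  refine ⟨Fintype.card (Finset (Fin n)), ?_⟩
  rintro c ⟨G, -, -, rfl⟩
  exact Finset.card_le_univ G

lemma card_le_exNum {r n : ℕ} {𝓕 : Set (Σ k : ℕ, Finset (Finset (Fin k)))}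
    {G : Finset (Finset (Fin n))} (hG : ∀ e ∈ G, e.card = r)
    (hF : ∀ F ∈ 𝓕, ¬ GraphContains G F.2) : G.card ≤ exNum r n 𝓕 :=
  le_csSup (bddAbove_exNum_set r n 𝓕) ⟨G, hG, hF, rfl⟩

/-- The Turán number is attained, except that it is the junk value `0` when no `𝓕`-free `r`-graph
exists. -/
lemma exNum_eq_zero_or (r n : ℕ) (𝓕 : Set (Σ k : ℕ, Finset (Finset (Fin k)))) :
    exNum r n 𝓕 = 0 ∨ ∃ G : Finset (Finset (Fin n)), (∀ e ∈ G, e.card = r) ∧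
      (∀ F ∈ 𝓕, ¬ GraphContains G F.2) ∧ G.card = exNum r n 𝓕 := by
  rcases Set.eq_empty_or_nonempty {c : ℕ | ∃ G : Finset (Finset (Fin n)), (∀ e ∈ G, e.card = r) ∧
      (∀ F ∈ 𝓕, ¬ GraphContains G F.2) ∧ G.card = c} with h | h
  · left
    rw [exNum, h]
    simp
  · right
    exact Nat.sSup_mem h (bddAbove_exNum_set r n 𝓕)

/-- Deleting each vertex in turn from an extremal `r`-graph on `n + 1` vertices and averaging. -/
lemma exNum_succ_mul_le (r n : ℕ) (𝓕 : Set (Σ k : ℕ, Finset (Finset (Fin k)))) :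
    exNum r (n + 1) 𝓕 * (n + 1 - r) ≤ (n + 1) * exNum r n 𝓕 := by
  classical
  rcases exNum_eq_zero_or r (n + 1) 𝓕 with h | ⟨G, hG, hfree, hcard⟩
  · simp [h]
  rw [← hcard]
  have hdel : ∀ v : Fin (n + 1), (G.filter fun e => v ∉ e).card ≤ exNum r n 𝓕 := by
    intro v
    let D : Finset (Finset (Fin n)) :=
      Finset.univ.filter fun e => e.image v.succAbove ∈ G
    have hD : (G.filter fun e => v ∉ e) ⊆ D.image fun e => e.image v.succAbove := by
      intro e he
      obtain ⟨he, hv⟩ := Finset.mem_filter.mp he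
      have hpre : (Finset.univ.filter fun i => v.succAbove i ∈ e).image v.succAbove = e := by
        ext w
        simp only [Finset.mem_image, Finset.mem_filter, Finset.mem_univ, true_and]
        constructor
        · rintro ⟨i, hi, rfl⟩
          exact hi
        · intro hw
          obtain ⟨i, rfl⟩ := Fin.exists_succAbove_eq (x := w) (y := v)
            (fun h => hv (h ▸ hw))
          exact ⟨i, hw, rfl⟩
      refine Finset.mem_image.mpr ⟨_, ?_, hpre⟩
      simp only [D, Finset.mem_filter, Finset.mem_univ, true_and, hpre, he]
    refine (Finset.card_le_card hD).trans (Finset.card_image_le.trans (card_le_exNum ?_ ?_))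
    · intro e he
      have := hG _ (Finset.mem_filter.mp he).2
      rwa [Finset.card_image_of_injective _ Fin.succAbove_right_injective] at this
    · rintro F hF ⟨φ, hφ, hφF⟩
      refine hfree F hF ⟨v.succAbove ∘ φ, Fin.succAbove_right_injective.comp hφ, fun e he => ?_⟩
      rw [← Finset.image_image]
      exact (Finset.mem_filter.mp (hφF e he)).2
  have hcount : ∑ v : Fin (n + 1), (G.filter fun e => v ∉ e).card = G.card * (n + 1 - r) := by
    have := Finset.sum_card_bipartiteAbove_eq_sum_card_bipartiteBelow
      (s := (Finset.univ : Finset (Fin (n + 1)))) (t := G) (fun v e => v ∉ e)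
    simp only [Finset.bipartiteAbove, Finset.bipartiteBelow] at this
    rw [this, Finset.sum_congr rfl (g := fun _ => n + 1 - r)]
    · simp
    · intro e he
      have h2 : (Finset.univ.filter fun v => v ∉ e) = eᶜ := by
        ext v; simp
      rw [h2, Finset.card_compl, hG e he, Fintype.card_fin]
  rw [← hcount]
  refine (Finset.sum_le_sum fun v _ => hdel v).trans ?_
  simp

lemma exists_tendsto_exNum (r : ℕ) (𝓕 : Set (Σ k : ℕ, Finset (Finset (Fin k)))) :
    ∃ p : ℝ, Tendsto (fun n => (exNum r n 𝓕 : ℝ) / (n.choose r : ℝ)) atTop (𝓝 p) := by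
  have hanti : Antitone fun n => (exNum r (n + r) 𝓕 : ℝ) / ((n + r).choose r : ℝ) := by
    refine antitone_nat_of_succ_le fun n => ?_
    have h1 := exNum_succ_mul_le r (n + r) 𝓕
    have h2 := Nat.choose_mul_succ_eq (n + r) r
    have e1 : n + r + 1 - r = n + 1 := by omega
    rw [e1] at h1 h2
    have e2 : n + 1 + r = n + r + 1 := by omega
    have hp1 : 0 < (n + r).choose r := Nat.choose_pos (by omega)
    have hp2 : 0 < (n + r + 1).choose r := Nat.choose_pos (by omega)
    rw [e2, div_le_div_iff₀ (by exact_mod_cast hp2) (by exact_mod_cast hp1)]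
    norm_cast
    refine Nat.le_of_mul_le_mul_right (c := n + r + 1) ?_ (by omega)
    calc exNum r (n + r + 1) 𝓕 * (n + r).choose r * (n + r + 1)
        = exNum r (n + r + 1) 𝓕 * (n + 1) * (n + r + 1).choose r := by
          rw [mul_assoc, h2]; ring
      _ ≤ (n + r + 1) * exNum r (n + r) 𝓕 * (n + r + 1).choose r := Nat.mul_le_mul_right _ h1
      _ = _ := by ring
  refine ⟨_, (tendsto_add_atTop_iff_nat r).mp (tendsto_atTop_ciInf hanti ⟨0, ?_⟩)⟩
  rintro _ ⟨n, rfl⟩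
  positivity

/-! ### Supersaturation and blow-ups -/

/-- Supersaturation with a fixed pattern of edges: if the density of `G` exceeds `a / C(M, r)` by a
fixed amount, then a positive proportion of all maps `Fin M → Fin n` are injective and pull `G` back
to one and the same `r`-graph `Q`, which has more than `a` edges. -/
lemma exists_common_pullback {r M : ℕ} (hM : r ≤ M) (a : ℕ) (b η : ℝ) (hη : 0 < η)
    (ha : (a : ℝ) ≤ b * (M.choose r : ℝ)) :
    ∃ n₀ : ℕ, ∀ n : ℕ, n₀ ≤ n → ∀ G : Finset (Finset (Fin n)), (∀ e ∈ G, e.card = r) →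
      b + 2 * η ≤ (r.factorial : ℝ) * G.card / (n : ℝ) ^ r →
      ∃ Q : Finset (Finset (Fin M)), a < Q.card ∧
        η / Fintype.card (Finset (Finset (Fin M))) * (n : ℝ) ^ M ≤
          ((Finset.univ.filter fun ψ : Fin M → Fin n =>
            Function.Injective ψ ∧ pullback r G ψ = Q).card : ℝ) := by
  classical
  obtain ⟨n₀, hn₀⟩ := exists_nat_gt ((M : ℝ) ^ 2 / η)
  refine ⟨max n₀ 1, fun n hn G hG hdens => ?_⟩
  have hn1 : 0 < n := le_trans (le_max_right n₀ 1) hn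
  have hnpos : (0 : ℝ) < n := by exact_mod_cast hn1
  have hnlarge : (M : ℝ) ^ 2 ≤ η * n := by
    have h1 : (n₀ : ℝ) ≤ n := by exact_mod_cast le_trans (le_max_left n₀ 1) hn
    rw [div_lt_iff₀ hη] at hn₀
    nlinarith
  set N : ℝ := (n : ℝ) ^ M with hN
  have hNpos : 0 < N := by positivity
  set C : ℝ := (M.choose r : ℝ) with hC
  have hCpos : 0 < C := by
    rw [hC]
    exact_mod_cast Nat.choose_pos hM
  let B : Finset (Fin M → Fin n) :=
    Finset.univ.filter fun ψ => Function.Injective ψ ∧ a < (pullback r G ψ).card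
  let I : Finset (Fin M → Fin n) := Finset.univ.filter fun ψ => ¬ Function.Injective ψ
  have hI : (I.card : ℝ) ≤ η * N := by
    have h := card_not_injective_mul_le (Fin n) M
    have h' : (I.card : ℝ) * n ≤ (M : ℝ) ^ 2 * N := by
      rw [hN]
      simp only [Fintype.card_fin] at h
      exact_mod_cast h
    have h'' : (I.card : ℝ) * n ≤ (η * N) * n := by nlinarith
    exact le_of_mul_le_mul_right h'' hnpos
  have hsum : ∑ ψ : Fin M → Fin n, ((pullback r G ψ).card : ℝ) =
      N * (C * ((r.factorial : ℝ) * G.card / (n : ℝ) ^ r)) := by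
    have h := sum_weight_card_pullback M G hG (fun _ => (n : ℝ)⁻¹) (by simp [hn1.ne'])
    rw [lagrangePoly_graphPattern_uniform G hG] at h
    rw [← h]
    simp only [Finset.prod_const, Finset.card_univ, Fintype.card_fin, ← Finset.mul_sum]
    rw [← mul_assoc, hN, ← mul_pow, mul_inv_cancel₀ hnpos.ne', one_pow, one_mul]
  have hupper : ∑ ψ : Fin M → Fin n, ((pullback r G ψ).card : ℝ) ≤
      N * (b * C) + I.card * C + B.card * C := by
    have hterm : ∀ ψ : Fin M → Fin n, ((pullback r G ψ).card : ℝ) ≤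
        b * C + (if ¬ Function.Injective ψ then 1 else 0) * C +
          (if Function.Injective ψ ∧ a < (pullback r G ψ).card then 1 else 0) * C := by
      intro ψ
      have hle : ((pullback r G ψ).card : ℝ) ≤ C := by
        rw [hC]
        exact_mod_cast card_pullback_le G ψ
      have hb0 : 0 ≤ b * C := (Nat.cast_nonneg a).trans ha
      by_cases hψ : Function.Injective ψ
      · by_cases hc : a < (pullback r G ψ).card
        · simp only [hψ, hc, not_true_eq_false, if_false, and_self, if_true]
          linarith
        · have : ((pullback r G ψ).card : ℝ) ≤ a := by exact_mod_cast not_lt.mp hc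
          simp only [hψ, hc, not_true_eq_false, if_false, and_false]
          linarith
      · simp only [hψ, not_false_eq_true, if_true, false_and, if_false]
        linarith
    refine (Finset.sum_le_sum fun ψ _ => hterm ψ).trans (le_of_eq ?_)
    rw [Finset.sum_add_distrib, Finset.sum_add_distrib, ← Finset.sum_mul _ _ C,
      ← Finset.sum_mul _ _ C, ← Finset.sum_mul _ _ C, Finset.sum_boole, Finset.sum_boole]
    simp [B, I, hN]
    ring
  have hB : η * N ≤ B.card := by
    have h1 : N * (C * (b + 2 * η)) ≤ N * (b * C) + I.card * C + B.card * C := by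
      refine le_trans ?_ (hsum ▸ hupper)
      gcongr
    have h2 : (I.card : ℝ) * C ≤ η * N * C := mul_le_mul_of_nonneg_right hI hCpos.le
    have h3 : η * N * C ≤ B.card * C := by linarith
    exact le_of_mul_le_mul_right h3 hCpos
  set P : ℝ := (Fintype.card (Finset (Finset (Fin M))) : ℝ) with hP
  have hPpos : 0 < P := by
    rw [hP]
    exact_mod_cast Fintype.card_pos
  obtain ⟨Q, -, hQ⟩ := Finset.exists_le_card_fiber_of_nsmul_le_card_of_maps_to
    (s := B) (t := (Finset.univ : Finset (Finset (Finset (Fin M)))))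
    (f := fun ψ => pullback r G ψ) (b := η / P * N) (fun _ _ => Finset.mem_univ _)
    Finset.univ_nonempty (by
      rw [nsmul_eq_mul, Finset.card_univ]
      calc P * (η / P * N) = η * N := by field_simp
        _ ≤ _ := hB)
  have hpos : 0 < (B.filter fun ψ => pullback r G ψ = Q).card := by
    rw [← Nat.cast_pos (α := ℝ)]
    exact lt_of_lt_of_le (by positivity) hQ
  obtain ⟨ψ, hψ⟩ := Finset.card_pos.mp hpos
  simp only [B, Finset.mem_filter, Finset.mem_univ, true_and] at hψ
  refine ⟨Q, hψ.2 ▸ hψ.1.2, hQ.trans ?_⟩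
  exact_mod_cast Finset.card_le_card fun ψ h => by
    simp only [B, Finset.mem_filter, Finset.mem_univ, true_and] at h ⊢
    exact ⟨h.1.1, h.2⟩

/-- Sampling from a blow-up.  `A v` lists `m` vertices replacing the vertex `v` of `Q`, such that any
choice of one vertex from each list is an embedding of `Q` into `G`.  Then every `f : Fin m → Fin k`
yields, by taking the `i`-th copy of `φ (f i)` for each `i`, an embedding of the pullback of `F`
along `f` into `G`. -/
lemma exists_subgraph_of_box {r m n M k : ℕ} (hm : 0 < m) {G : Finset (Finset (Fin n))}
    {Q : Finset (Finset (Fin M))} {F : Finset (Finset (Fin k))} (hF : ∀ e ∈ F, e.card = r)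
    (φ : Fin k → Fin M) (hφ : Function.Injective φ) (hφF : ∀ e ∈ F, e.image φ ∈ Q)
    (A : Fin M → Fin m → Fin n) (hA : ∀ v, Function.Injective (A v))
    (hbox : ∀ g : Fin M → Fin m, Function.Injective (fun v => A v (g v)) ∧
      ∀ e ∈ Q, e.image (fun v => A v (g v)) ∈ G)
    (f : Fin m → Fin k) :
    ∃ W : Finset (Fin n), W.card = m ∧ ∃ H ⊆ G, (∀ e ∈ H, e ⊆ W) ∧
      H.card = (pullback r F f).card := by
  classical
  let θ : Fin m → Fin n := fun i => A (φ (f i)) i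
  have hθ : Function.Injective θ := by
    intro i j hij
    by_cases hf : f i = f j
    · simp only [θ, hf] at hij
      exact hA _ hij
    · exfalso
      -- Copies of distinct vertices of `Q` are distinct, as some choice takes both.
      have hne : φ (f j) ≠ φ (f i) := fun h => hf (hφ h).symm
      have h := (hbox (fun v => if v = φ (f i) then i else j)).1
      have h' := @h (φ (f i)) (φ (f j)) (by simpa [hne, θ] using hij)
      exact hne h'.symm
  refine ⟨Finset.univ.image θ, by simp [Finset.card_image_of_injective _ hθ],
    (pullback r F f).image (fun e => e.image θ), ?_, ?_, ?_⟩
  · intro e' he'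
    obtain ⟨e, he, rfl⟩ := Finset.mem_image.mp he'
    obtain ⟨hcard, hmem⟩ := mem_pullback.mp he
    have hinj : Set.InjOn f e := by
      apply Finset.card_image_iff.mp
      rw [hF _ hmem, hcard]
    -- Choose the copy `i` of `φ (f i)` for `i ∈ e`; this is consistent as `φ ∘ f` is injective on `e`.
    have hg : ∃ g : Fin M → Fin m, ∀ i ∈ e, g (φ (f i)) = i := by
      refine ⟨fun v => if h : ∃ i ∈ e, φ (f i) = v then h.choose else ⟨0, hm⟩, fun i hi => ?_⟩
      have hex : ∃ j ∈ e, φ (f j) = φ (f i) := ⟨i, hi, rfl⟩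
      simp only [hex, dif_pos]
      exact hinj hex.choose_spec.1 hi (hφ hex.choose_spec.2)
    obtain ⟨g, hg⟩ := hg
    have hG := (hbox g).2 _ (hφF _ hmem)
    rw [Finset.image_image, Finset.image_image] at hG
    convert hG using 1
    refine Finset.image_congr fun i hi => ?_
    simp only [θ, Function.comp, hg i hi]
  · intro e' he'
    obtain ⟨e, -, rfl⟩ := Finset.mem_image.mp he'
    exact Finset.image_subset_image (Finset.subset_univ e)
  · exact Finset.card_image_of_injective _ (Finset.image_injective hθ)

/-! ### The two implications -/

/-- The family consists of all `r`-graphs on `m` vertices of density at least `l + c`, where `c`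
witnesses the jump and `m` is so large that uniform weights certify a Lagrangian above `l`. -/
lemma finite_family_of_isJump {r : ℕ} {l : ℝ} (hl : 0 ≤ l) (h : IsJump r l) :
    ∃ 𝓕 : Set (Σ k : ℕ, Finset (Finset (Fin k))), 𝓕.Finite ∧
      (∀ F ∈ 𝓕, ∀ e ∈ F.2, e.card = r) ∧
      (∃ p : ℝ, Tendsto (fun n => (exNum r n 𝓕 : ℝ) / (n.choose r : ℝ)) atTop (𝓝 p) ∧ p ≤ l) ∧
      (∀ F ∈ 𝓕, l < graphLagrangian r F.2) := by
  classical
  obtain ⟨c, hc, hjump⟩ := h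
  have hlim : Tendsto (fun n : ℕ => (l + c) * ((r.factorial : ℝ) * (n.choose r : ℝ) / (n : ℝ) ^ r))
      atTop (𝓝 ((l + c) * 1)) := (tendsto_factorial_mul_choose_div_pow r).const_mul _
  obtain ⟨m, hml, hmr, hm0⟩ := ((hlim.eventually_const_lt (by linarith : l < (l + c) * 1)).and
    ((eventually_ge_atTop r).and (eventually_gt_atTop 0))).exists
  let 𝓗 : Set (Finset (Finset (Fin m))) :=
    {F | (∀ e ∈ F, e.card = r) ∧ l + c ≤ (F.card : ℝ) / (m.choose r : ℝ)}
  have hchoose : (0 : ℝ) < m.choose r := by exact_mod_cast Nat.choose_pos hmr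
  refine ⟨Sigma.mk m '' 𝓗, (Set.toFinite 𝓗).image _, ?_, ?_, ?_⟩
  · rintro _ ⟨F, hF, rfl⟩
    exact hF.1
  · obtain ⟨p, hp⟩ := exists_tendsto_exNum r (Sigma.mk m '' 𝓗)
    refine ⟨p, hp, le_of_not_gt fun hpl => ?_⟩
    obtain ⟨n₀, hn₀⟩ := hjump ((p - l) / 2) (by linarith) m hmr
    obtain ⟨n, hn, hnn₀⟩ := ((hp.eventually_const_lt (by linarith : l + (p - l) / 2 < p)).and
      (eventually_ge_atTop n₀)).exists
    rcases exNum_eq_zero_or r n (Sigma.mk m '' 𝓗) with h0 | ⟨G, hG, hfree, hcard⟩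
    · rw [h0] at hn
      simp only [Nat.cast_zero, zero_div] at hn
      linarith
    · rw [← hcard] at hn
      obtain ⟨W, hW, H, hHG, hHW, hH⟩ := hn₀ n hnn₀ G hG hn.le
      let φ : Fin m → Fin n := W.orderEmbOfFin hW
      have hφ : Function.Injective φ := (W.orderEmbOfFin hW).injective
      have hrange : Finset.univ.image φ = W := by
        ext v
        rw [← Finset.mem_coe, ← Finset.mem_coe]
        simp [φ]
      -- The copy on `Fin m` of the dense subgraph `H` belongs to the family.
      let F : Finset (Finset (Fin m)) := Finset.univ.filter fun e => e.image φ ∈ H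
      have hFH : H = F.image fun e => e.image φ := by
        ext e
        simp only [F, Finset.mem_image, Finset.mem_filter, Finset.mem_univ, true_and]
        constructor
        · intro he
          obtain ⟨e', -, he'⟩ := Finset.subset_image_iff.mp (hrange ▸ hHW e he)
          exact ⟨e', he' ▸ he, he'⟩
        · rintro ⟨e', he', rfl⟩
          exact he'
      have hFcard : F.card = H.card := by
        conv_rhs => rw [hFH]
        exact (Finset.card_image_of_injective _ (Finset.image_injective hφ)).symm
      refine hfree ⟨m, F⟩ ⟨F, ⟨fun e he => ?_, by rw [hFcard]; exact hH⟩, rfl⟩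
        ⟨φ, hφ, fun e he => hHG (Finset.mem_filter.mp he).2⟩
      have := hG _ (hHG (Finset.mem_filter.mp he).2)
      rwa [Finset.card_image_of_injective _ hφ] at this
  · rintro _ ⟨F, hF, rfl⟩
    refine lt_of_lt_of_le (lt_of_lt_of_le hml ?_) (le_graphLagrangian hm0 F hF.1)
    have h1 := (le_div_iff₀ hchoose).mp hF.2
    calc (l + c) * ((r.factorial : ℝ) * (m.choose r : ℝ) / (m : ℝ) ^ r)
        = (r.factorial : ℝ) * ((l + c) * (m.choose r : ℝ)) / (m : ℝ) ^ r := by ring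
      _ ≤ _ := by gcongr

/-- Any `c` with `l + c < λ(F)` for all `F ∈ 𝓕` witnesses the jump; finiteness of `𝓕` provides it. -/
lemma isJump_of_finite_family {r : ℕ} (hr : 1 ≤ r) {l : ℝ} (hl : 0 ≤ l)
    {𝓕 : Set (Σ k : ℕ, Finset (Finset (Fin k)))} (hfin : 𝓕.Finite)
    (hunif : ∀ F ∈ 𝓕, ∀ e ∈ F.2, e.card = r) {p : ℝ}
    (hp : Tendsto (fun n => (exNum r n 𝓕 : ℝ) / (n.choose r : ℝ)) atTop (𝓝 p)) (hpl : p ≤ l)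
    (hlag : ∀ F ∈ 𝓕, l < graphLagrangian r F.2) : IsJump r l := by
  classical
  obtain ⟨c, hc, hcF⟩ : ∃ c : ℝ, 0 < c ∧ ∀ F ∈ 𝓕, l + c < graphLagrangian r F.2 := by
    have h : ∀ᶠ c : ℝ in 𝓝[>] 0, ∀ F ∈ 𝓕, l + c < graphLagrangian r F.2 := by
      rw [hfin.eventually_all]
      intro F hF
      have : Tendsto (fun c : ℝ => l + c) (𝓝[>] 0) (𝓝 (l + 0)) :=
        ((continuous_const.add continuous_id).tendsto 0).mono_left nhdsWithin_le_nhds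
      exact this.eventually_lt_const (by simpa using hlag F hF)
    obtain ⟨c, h1, h2⟩ := (h.and self_mem_nhdsWithin).exists
    exact ⟨c, h2, h1⟩
  refine ⟨c, hc, fun ε hε m hm => ?_⟩
  obtain ⟨M, hMex, hMr⟩ := ((hp.eventually_lt_const (by linarith : p < l + ε / 4)).and
    (eventually_ge_atTop r)).exists
  have hMc : (0 : ℝ) < M.choose r := by exact_mod_cast Nat.choose_pos hMr
  obtain ⟨n₁, hn₁⟩ := exists_common_pullback hMr (exNum r M 𝓕) (l + ε / 4) (ε / 8) (by linarith)
    ((div_le_iff₀ hMc).mp hMex.le)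
  have hδ : 0 < ε / 8 / Fintype.card (Finset (Finset (Fin M))) := by
    have : (0 : ℝ) < Fintype.card (Finset (Finset (Fin M))) := by exact_mod_cast Fintype.card_pos
    positivity
  obtain ⟨n₂, hn₂⟩ := exists_box m M _ hδ
  have hlim : Tendsto (fun n : ℕ => (l + ε) * ((r.factorial : ℝ) * (n.choose r : ℝ) / (n : ℝ) ^ r))
      atTop (𝓝 ((l + ε) * 1)) := (tendsto_factorial_mul_choose_div_pow r).const_mul _
  obtain ⟨n₃, hn₃⟩ := eventually_atTop.mp
    (hlim.eventually_const_lt (by linarith : l + ε / 2 < (l + ε) * 1))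
  refine ⟨max (max n₁ n₂) (max n₃ r), fun n hn G hG hdens => ?_⟩
  simp only [max_le_iff] at hn
  obtain ⟨⟨hnn₁, hnn₂⟩, hnn₃, hnr⟩ := hn
  have hnc : (0 : ℝ) < n.choose r := by exact_mod_cast Nat.choose_pos hnr
  have hmc : (0 : ℝ) < m.choose r := by exact_mod_cast Nat.choose_pos hm
  have hdens' : l + ε / 4 + 2 * (ε / 8) ≤ (r.factorial : ℝ) * G.card / (n : ℝ) ^ r := by
    have h1 := (le_div_iff₀ hnc).mp hdens
    calc l + ε / 4 + 2 * (ε / 8) = l + ε / 2 := by ring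
      _ ≤ (l + ε) * ((r.factorial : ℝ) * (n.choose r : ℝ) / (n : ℝ) ^ r) := (hn₃ n hnn₃).le
      _ = (r.factorial : ℝ) * ((l + ε) * (n.choose r : ℝ)) / (n : ℝ) ^ r := by ring
      _ ≤ _ := by gcongr
  obtain ⟨Q, hQcard, hQ⟩ := hn₁ n hnn₁ G hG hdens'
  obtain ⟨A, hA, hbox⟩ := hn₂ n hnn₂ _ hQ
  have hbox' : ∀ g : Fin M → Fin m, Function.Injective (fun v => A v (g v)) ∧
      pullback r G (fun v => A v (g v)) = Q := fun g => by
    simpa only [Finset.mem_filter, Finset.mem_univ, true_and] using hbox g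
  have hQpull : ∀ (g : Fin M → Fin m), ∀ e ∈ Q, e.card = r ∧ e.image (fun v => A v (g v)) ∈ G :=
    fun g e he => mem_pullback.mp ((hbox' g).2 ▸ he)
  have hmpos : 0 < m := lt_of_lt_of_le hr hm
  obtain ⟨⟨k, F⟩, hF, φ, hφ, hφF⟩ : ∃ F ∈ 𝓕, GraphContains Q F.2 := by
    by_contra hcon
    push Not at hcon
    exact absurd (card_le_exNum (fun e he => (hQpull (fun _ => ⟨0, hmpos⟩) e he).1) hcon)
      (not_le.mpr hQcard)
  obtain ⟨x, hx, hxl⟩ : ∃ x ∈ stdSimplex ℝ (Fin k),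
      l + c < lagrangePoly r (graphPattern F) x := by
    have h := hcF _ hF
    have hne : (lagrangePoly r (graphPattern F) '' stdSimplex ℝ (Fin k)).Nonempty := by
      by_contra hemp
      rw [Set.not_nonempty_iff_eq_empty] at hemp
      simp only [graphLagrangian, patternLagrangian, hemp, Real.sSup_empty] at h
      linarith
    obtain ⟨_, ⟨x, hx, rfl⟩, hxl⟩ := exists_lt_of_lt_csSup hne h
    exact ⟨x, hx, hxl⟩
  obtain ⟨f, hf⟩ := exists_pullback_card_ge m F (hunif _ hF) x hx
  obtain ⟨W, hW, H, hHG, hHW, hHcard⟩ := exists_subgraph_of_box hmpos (hunif _ hF) φ hφ hφF A hA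
    (fun g => ⟨(hbox' g).1, fun e he => (hQpull g e he).2⟩) f
  refine ⟨W, hW, H, hHG, hHW, ?_⟩
  rw [hHcard, le_div_iff₀ hmc]
  refine le_trans ?_ hf
  rw [mul_comm]
  gcongr

/-- Frankl–Rödl: `λ₀` is a jump for `r` iff there is a finite family `𝓕`
of `r`-graphs with `π(𝓕) ≤ λ₀` and `λ(F) > λ₀` for all `F ∈ 𝓕`. -/
theorem isJump_iff_finite_family (r : ℕ) (hr : 2 ≤ r) (l : ℝ) (hl : l ∈ Set.Icc (0:ℝ) 1) :
    IsJump r l ↔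
      ∃ 𝓕 : Set (Σ k : ℕ, Finset (Finset (Fin k))), 𝓕.Finite ∧
        (∀ F ∈ 𝓕, ∀ e ∈ F.2, e.card = r) ∧
        (∃ p : ℝ, Tendsto (fun n => (exNum r n 𝓕 : ℝ) / (n.choose r : ℝ)) atTop (nhds p) ∧
          p ≤ l) ∧
        (∀ F ∈ 𝓕, l < graphLagrangian r F.2) := by
  constructor
  · exact finite_family_of_isJump hl.1
  · rintro ⟨𝓕, hfin, hunif, ⟨p, hp, hpl⟩, hlag⟩
    exact isJump_of_finite_family (by omega) hl.1 hfin hunif hp hpl hlag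
end

section
/- Let r ≥ 2 be an integer, P = (m, 𝓔) a minimal r-pattern, and for λ ∈ [0,1] define f(λ) = max{ λ_𝓔(x) + λ·x_m^r : x = (x_1,…,x_m) ∈ Δ_{m−1} }. Then every x ∈ Δ_{m−1} that attains the maximum defining f(λ) satisfies x_m > 0, and consequently f is strictly increasing on [0,1]: if 0 ≤ λ_1 < λ_2 ≤ 1 then f(λ_1) < f(λ_2). -/
/-!
A point `x` of the simplex with `x_m = 0` is a point of the simplex of `P - m`, at which the
perturbed polynomial `λ_𝓔(x) + l * x_m ^ r` takes the same value as the Lagrange polynomial of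
`P - m` (`lagrangePoly_eq_subFamily`). Its value is therefore at most `λ(P - m)`, which by
minimality is less than `λ(P) ≤ f(l)`; so such an `x` is not a maximizer. For strict monotonicity,
compactness provides a maximizer `x` for `l₁`; since `x_m > 0`, the value at `x` increases strictly
when `l₁` is replaced by `l₂`.
-/

open Filter Topology

lemma continuous_lagrangePoly {ι : Type} [Fintype ι] [DecidableEq ι]
    (r : ℕ) (E : Finset (Multiset ι)) : Continuous (lagrangePoly r E) := by
  unfold lagrangePoly
  fun_prop

lemma bddAbove_lagrangePoly_image {ι : Type} [Fintype ι] [DecidableEq ι]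
    (r : ℕ) (E : Finset (Multiset ι)) : BddAbove (lagrangePoly r E '' stdSimplex ℝ ι) :=
  ((isCompact_stdSimplex (𝕜 := ℝ) ι).image (continuous_lagrangePoly r E)).bddAbove

/-- Relabelling a multiset supported in `S` as a multiset on the subtype loses nothing: mapping
back along the inclusion recovers it. -/
lemma map_val_filterMap_subtype {ι : Type} [DecidableEq ι] (S : Finset ι) (e : Multiset ι)
    (he : ∀ i ∈ e, i ∈ S) :
    Multiset.map Subtype.val (Multiset.filterMap
      (fun i => if h : i ∈ S then some (⟨i, h⟩ : {i : ι // i ∈ S}) else none) e) = e := by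
  rw [Multiset.map_filterMap]
  induction e using Multiset.induction_on with
  | empty => simp
  | cons a s ih =>
    have ha : a ∈ S := he a (Multiset.mem_cons_self a s)
    rw [Multiset.filterMap_cons_some _ a s (b := a) (by simp [ha])]
    rw [ih fun i hi => he i (Multiset.mem_cons_of_mem hi)]

/-- The induced family `𝓔[S]` is the relabelling of the subfamily `F` of members of `E` supported
in `S`; describing `F` by its membership makes the decidability instance used to form it
irrelevant. -/
lemma exists_subFamily_eq_image {ι : Type} [DecidableEq ι] (E : Finset (Multiset ι))
    (S : Finset ι) :
    ∃ F : Finset (Multiset ι), (∀ e, e ∈ F ↔ e ∈ E ∧ ∀ j ∈ e, j ∈ S) ∧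
      subFamily E S = F.image (fun e => Multiset.filterMap
        (fun j => if h : j ∈ S then some (⟨j, h⟩ : {j : ι // j ∈ S}) else none) e) :=
  ⟨_, fun _ => Finset.mem_filter, rfl⟩

/-- Where `x i = 0`, the Lagrange polynomial of `P` agrees with that of `P - i`. -/
lemma lagrangePoly_eq_subFamily {ι : Type} [Fintype ι] [DecidableEq ι]
    (r : ℕ) (E : Finset (Multiset ι)) (i : ι) (x : ι → ℝ) (hx : x i = 0) :
    lagrangePoly r E x =
      lagrangePoly r (subFamily E (Finset.univ.erase i)) (fun j => x j.1) := by
  -- `F` is the family of members of `E` avoiding `i`, still as multisets on `ι`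
  obtain ⟨F, hF, hsub⟩ := exists_subFamily_eq_image E (Finset.univ.erase i)
  have hFE : F ⊆ E := fun e he => ((hF e).mp he).1
  unfold lagrangePoly
  rw [hsub, Finset.sum_image]
  · congr 1
    rw [← Finset.sum_subset hFE]
    · refine Finset.sum_congr rfl fun e he => ?_
      have heS := ((hF e).mp he).2
      have hi : i ∉ e := fun h => by simpa using heS i h
      rw [← Finset.mul_prod_erase Finset.univ _ (Finset.mem_univ i),
        Multiset.count_eq_zero_of_notMem hi, ← Finset.prod_coe_sort]
      simp only [pow_zero, Nat.factorial_zero, Nat.cast_one, div_one, one_mul]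
      refine Finset.prod_congr rfl fun j _ => ?_
      rw [← Multiset.count_map_eq_count' Subtype.val _ Subtype.val_injective j,
        map_val_filterMap_subtype _ e heS]
    · -- a multiset containing `i` contributes a product with the vanishing factor at `i`
      intro e he heF
      refine Finset.prod_eq_zero (Finset.mem_univ i) ?_
      have hi : i ∈ e := by
        by_contra hi
        refine heF ((hF e).mpr ⟨he, fun j hj => ?_⟩)
        exact Finset.mem_erase.mpr ⟨fun h => hi (h ▸ hj), Finset.mem_univ j⟩
      rw [hx, zero_pow (Multiset.count_pos.mpr hi).ne', zero_div]
  · intro e he d hd h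
    rw [← map_val_filterMap_subtype _ e ((hF e).mp he).2,
      ← map_val_filterMap_subtype _ d ((hF d).mp hd).2]
    exact congrArg _ h

/-- A point of the simplex with vanishing `i`-th coordinate has value at most `λ(P - i)`. -/
lemma lagrangePoly_le_of_eq_zero {ι : Type} [Fintype ι] [DecidableEq ι]
    (r : ℕ) (E : Finset (Multiset ι)) (i : ι) (x : ι → ℝ) (hxs : x ∈ stdSimplex ℝ ι)
    (hx : x i = 0) :
    lagrangePoly r E x ≤ patternLagrangian r (subFamily E (Finset.univ.erase i)) := by
  rw [lagrangePoly_eq_subFamily r E i x hx]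
  refine le_csSup (bddAbove_lagrangePoly_image _ _) ⟨_, ⟨fun j => hxs.1 j, ?_⟩, rfl⟩
  rw [Finset.sum_coe_sort (Finset.univ.erase i) x, ← hxs.2,
    ← Finset.add_sum_erase Finset.univ x (Finset.mem_univ i), hx, zero_add]

/-- for a minimal pattern, every maximizer of `λ_𝓔(x) + λ·x_m^r` on
`Δ_{m−1}` has `x_m > 0`, and consequently `f` is strictly increasing on `[0,1]`. -/
theorem f_strictMono (r m : ℕ) (hr : 2 ≤ r) (hm : 0 < m)
    (E : Finset (Multiset (Fin m))) (hE : ∀ e ∈ E, Multiset.card e = r)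
    (hmin : IsMinimalPattern r E)
    (f : ℝ → ℝ)
    (hf : ∀ l ∈ Set.Icc (0:ℝ) 1, f l =
      sSup ((fun x : Fin m → ℝ =>
        lagrangePoly r E x + l * x ⟨m - 1, by omega⟩ ^ r) '' stdSimplex ℝ (Fin m))) :
    (∀ l ∈ Set.Icc (0:ℝ) 1, ∀ x ∈ stdSimplex ℝ (Fin m),
        lagrangePoly r E x + l * x ⟨m - 1, by omega⟩ ^ r = f l →
          0 < x ⟨m - 1, by omega⟩) ∧
      StrictMonoOn f (Set.Icc (0:ℝ) 1) := by
  set k : Fin m := ⟨m - 1, by omega⟩ with hk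
  have hcont : ∀ l : ℝ, Continuous fun x : Fin m → ℝ => lagrangePoly r E x + l * x k ^ r :=
    fun l => (continuous_lagrangePoly r E).add (by fun_prop)
  have hcomp : ∀ l : ℝ, IsCompact ((fun x : Fin m → ℝ =>
      lagrangePoly r E x + l * x k ^ r) '' stdSimplex ℝ (Fin m)) :=
    fun l => (isCompact_stdSimplex (𝕜 := ℝ) (Fin m)).image (hcont l)
  have hne : (stdSimplex ℝ (Fin m)).Nonempty := ⟨_, single_mem_stdSimplex ℝ k⟩
  have hle : ∀ l ∈ Set.Icc (0:ℝ) 1, ∀ x ∈ stdSimplex ℝ (Fin m),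
      lagrangePoly r E x + l * x k ^ r ≤ f l := by
    intro l hl x hx
    rw [hf l hl]
    exact le_csSup (hcomp l).bddAbove ⟨x, hx, rfl⟩
  have hpos : ∀ l ∈ Set.Icc (0:ℝ) 1, ∀ x ∈ stdSimplex ℝ (Fin m),
      lagrangePoly r E x + l * x k ^ r = f l → 0 < x k := by
    intro l hl x hx hmax
    refine lt_of_le_of_ne (hx.1 k) fun h0 => ?_
    have hsub := lagrangePoly_le_of_eq_zero r E k x hx h0.symm
    rw [← h0, zero_pow (by omega), mul_zero, add_zero] at hmax
    have hPf : patternLagrangian r E ≤ f l := by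
      refine csSup_le (hne.image _) ?_
      rintro _ ⟨y, hy, rfl⟩
      exact (le_add_of_nonneg_right (mul_nonneg hl.1 (pow_nonneg (hy.1 k) r))).trans (hle l hl y hy)
    linarith [hmin k]
  refine ⟨hpos, fun l₁ hl₁ l₂ hl₂ hlt => ?_⟩
  obtain ⟨x, hx, hmax⟩ := (hcomp l₁).sSup_mem (hne.image _)
  replace hmax : lagrangePoly r E x + l₁ * x k ^ r = f l₁ := hmax.trans (hf l₁ hl₁).symm
  have hxk := pow_pos (hpos l₁ hl₁ x hx hmax) r
  have hmul := mul_lt_mul_of_pos_right hlt hxk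
  linarith [hle l₂ hl₂ x hx]
end

section
/- Let r ≥ 3 be an integer and α ∈ [0,1], and suppose there exists a sequence (G_t)_{t=1}^∞ of r-graphs whose associated patterns (P_{G_t})_{t=1}^∞ form a non-jump sequence on α. Let P = (m, 𝓔) be a minimal r-pattern with λ(P) < 1. Then for every i ∈ [m], the number f_i(α) = max{ λ_𝓔(x) + α·x_i^r : x = (x_1,…,x_m) ∈ Δ_{m−1} } is a non-jump for r. -/
/-!
The proof follows the Frankl–Rödl method. Write `f = max (λ_E(x) + α x_i ^ r)`.

The Lagrange polynomial `λ_E(x)` is the probability that `r` independent samples from `x` form a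
multiset in `E` (`lagrangePoly_eq_tupleSum`). All the computations below are manipulations of such
sums over `r`-tuples: they push forward along maps of index sets (`tupleSum_push`), which gives
their behaviour under passing to subpatterns and under replacing index `i` of `E` by a copy of
`G_t` (`tupleSum_union_le`, `tupleSum_union_eq`).

Suppose `f` is a jump with constant `c`. Choose `M` so large that `M ^ r / (r! * choose M r)` is
close to `1`, and then `t` so large that every subpattern of `G_t` on at most `M` vertices has
Lagrangian at most `α`, while `G_t` itself has Lagrangian greater than `α`.

* Lower bound. A maximiser `x` for `f` has `x_i > 0` by minimality of `E` (`maximiser_pos`), and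
  `λ(E) < 1` excludes the constant multiset at `i` from `E` (`replicate_notMem`). Hence the union
  of `E` and `G_t` at `i` has Lagrange polynomial exceeding `f` at a product weight, and a random
  blow-up of it on `N` vertices has expected density equal to that value
  (`exists_dense_blowup`). The jump property yields `M` vertices spanning density at least `f + c`.
* Upper bound. These `M` vertices meet at most `M` parts of the copy of `G_t`, so the copy
  contributes at most `α z_i ^ r`, where `z` is the vector of part sizes, and the number of edges
  is at most `(λ_E(z) + α z_i ^ r) / r! ≤ f M ^ r / r!` (`card_blowup_le`). By the choice of `M`
  this is less than `(f + c) * choose M r`, a contradiction.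
-/

open Filter Topology

/-! ### Tuple sums and the Lagrange polynomial -/

/-- The total weight `∑_u ∏_j w (u j)` of the `r`-tuples `u` whose underlying multiset satisfies
`Q`; when `w` is a probability vector, this is the probability that `r` independent samples from
`w` form a multiset satisfying `Q`. -/
noncomputable def tupleSum {J : Type} [Fintype J] (r : ℕ) (Q : Multiset J → Prop)
    (w : J → ℝ) : ℝ := by
  classical
  exact ∑ u : Fin r → J, if Q (Finset.univ.val.map u) then ∏ j, w (u j) else 0

/-- The number of orderings of an `r`-multiset `e` is `r! / ∏ e(i)!`; it is read off from the
coefficient of the monomial `e` in the two expansions of `(∑ X_i) ^ r`. -/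
lemma card_tuples {ι : Type} [Fintype ι] [DecidableEq ι] (r : ℕ) (e : Multiset ι)
    (he : Multiset.card e = r) :
    ((Finset.univ.filter (fun u : Fin r → ι => Finset.univ.val.map u = e)).card : ℝ) *
      ∏ i, ((Multiset.count i e).factorial : ℝ) = r.factorial := by
  classical
  have h1 := Fintype.sum_pow (fun i : ι => (MvPolynomial.X i : MvPolynomial ι ℕ)) r
  rw [Finset.sum_pow_eq_sum_piAntidiag] at h1
  have h2 := congrArg (MvPolynomial.coeff (Multiset.toFinsupp e)) h1
  simp only [MvPolynomial.coeff_sum] at h2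
  have hsum : ∑ i, Multiset.count i e = r := by
    rw [← he]; exact Multiset.sum_count_eq_card (fun _ _ => Finset.mem_univ _)
  have hL : ∀ k : ι → ℕ, MvPolynomial.coeff (Multiset.toFinsupp e)
      ((Nat.multinomial Finset.univ k : MvPolynomial ι ℕ) * ∏ i, MvPolynomial.X i ^ k i)
      = if k = (fun i => Multiset.count i e) then Nat.multinomial Finset.univ k else 0 := by
    intro k
    have : (∏ i, (MvPolynomial.X i : MvPolynomial ι ℕ) ^ k i)
        = MvPolynomial.monomial (Finsupp.equivFunOnFinite.symm k) 1 := by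
      rw [MvPolynomial.monomial_eq]
      simp [Finsupp.prod_fintype]
    rw [this, ← MvPolynomial.C_eq_coe_nat, MvPolynomial.coeff_C_mul, MvPolynomial.coeff_monomial]
    have hiff : (Finsupp.equivFunOnFinite.symm k = Multiset.toFinsupp e) ↔
        k = (fun i => Multiset.count i e) := by
      constructor
      · intro h; funext i
        simpa using DFunLike.congr_fun h i
      · intro h; ext i; simp [h]
    simp [hiff]
  have hR : ∀ u : Fin r → ι, MvPolynomial.coeff (Multiset.toFinsupp e)
      (∏ j, (MvPolynomial.X (u j) : MvPolynomial ι ℕ))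
      = if Finset.univ.val.map u = e then 1 else 0 := by
    intro u
    have : (∏ j, (MvPolynomial.X (u j) : MvPolynomial ι ℕ))
        = MvPolynomial.monomial (Multiset.toFinsupp (Finset.univ.val.map u)) 1 := by
      have h3 : Multiset.toFinsupp (Finset.univ.val.map u)
          = ∑ j, Finsupp.single (u j) 1 := by
        ext i
        rw [Multiset.toFinsupp_apply, Finsupp.finsetSum_apply, Multiset.count_map,
          ← Finset.filter_val, Finset.card_val, Finset.card_filter]
        refine Finset.sum_congr rfl fun j _ => ?_
        simp [Finsupp.single_apply, eq_comm]
      rw [h3, MvPolynomial.monomial_sum_one]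
      rfl
    rw [this, MvPolynomial.coeff_monomial]
    simp
  rw [Finset.sum_congr rfl (fun k _ => hL k), Finset.sum_congr rfl (fun u _ => hR u),
    Finset.sum_ite_eq' , if_pos (by simp [hsum]), Finset.sum_boole] at h2
  have h3 := Nat.multinomial_spec Finset.univ (fun i => Multiset.count i e)
  rw [hsum] at h3
  have h4 : (Finset.univ.filter (fun u : Fin r → ι => Finset.univ.val.map u = e)).card *
      ∏ i, (Multiset.count i e).factorial = r.factorial := by
    rw [← h3, h2, mul_comm]; simp
  exact_mod_cast h4

lemma lagrangePoly_eq_tupleSum {ι : Type} [Fintype ι] [DecidableEq ι] (r : ℕ)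
    (E : Finset (Multiset ι)) (hE : ∀ e ∈ E, Multiset.card e = r) (x : ι → ℝ) :
    lagrangePoly r E x = tupleSum r (· ∈ E) x := by
  classical
  unfold lagrangePoly tupleSum
  have hprod : ∀ u : Fin r → ι, ∏ j, x (u j)
      = ∏ i, x i ^ Multiset.count i (Finset.univ.val.map u) := by
    intro u
    have h := Finset.prod_multiset_map_count (Finset.univ.val.map u) x
    rw [Multiset.map_map] at h
    have h' : ∏ j, x (u j) = (Multiset.map (x ∘ u) Finset.univ.val).prod := rfl
    rw [h', h]
    refine Finset.prod_subset (Finset.subset_univ _) fun i _ hi => ?_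
    rw [Multiset.mem_toFinset] at hi
    rw [Multiset.count_eq_zero_of_notMem hi, pow_zero]
  have hsplit : ∀ u : Fin r → ι,
      (if Finset.univ.val.map u ∈ E then ∏ j, x (u j) else 0)
      = ∑ e ∈ E, if Finset.univ.val.map u = e then ∏ i, x i ^ Multiset.count i e else 0 := by
    intro u
    rw [Finset.sum_ite_eq, hprod]
  refine Eq.trans ?_ (Finset.sum_congr rfl
    (fun u _ => Eq.trans (by congr) (hsplit u))).symm
  rw [Finset.sum_comm, Finset.mul_sum]
  refine Finset.sum_congr rfl fun e he => ?_
  rw [← Finset.sum_filter, Finset.sum_const, nsmul_eq_mul, Finset.prod_div_distrib,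
    ← card_tuples r e (hE e he)]
  have : (∏ i, ((Multiset.count i e).factorial : ℝ)) ≠ 0 :=
    Finset.prod_ne_zero_iff.2 fun i _ => by positivity
  field_simp

lemma tupleSum_mono {J : Type} [Fintype J] (r : ℕ) {Q Q' : Multiset J → Prop} {w : J → ℝ}
    (hw : ∀ j, 0 ≤ w j)
    (h : ∀ u : Fin r → J, (∀ j, w (u j) ≠ 0) → Q (Finset.univ.val.map u) →
      Q' (Finset.univ.val.map u)) :
    tupleSum r Q w ≤ tupleSum r Q' w := by
  classical
  unfold tupleSum
  refine Finset.sum_le_sum fun u _ => ?_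
  have hp : 0 ≤ ∏ j, w (u j) := Finset.prod_nonneg fun j _ => hw _
  by_cases h0 : ∀ j, w (u j) ≠ 0
  · by_cases hQ : Q (Finset.univ.val.map u)
    · rw [if_pos hQ, if_pos (h u h0 hQ)]
    · rw [if_neg hQ]; split_ifs <;> simp [hp]
  · push Not at h0
    obtain ⟨j, hj⟩ := h0
    have : ∏ j, w (u j) = 0 := Finset.prod_eq_zero (Finset.mem_univ j) hj
    simp [this]

lemma tupleSum_smul {J : Type} [Fintype J] (r : ℕ) (Q : Multiset J → Prop) (w : J → ℝ) (s : ℝ) :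
    tupleSum r Q (fun j => s * w j) = s ^ r * tupleSum r Q w := by
  classical
  unfold tupleSum
  rw [Finset.mul_sum]
  refine Finset.sum_congr rfl fun u _ => ?_
  rw [Finset.prod_mul_distrib]
  split_ifs <;> simp

/-- Tuple sums are compatible with pushing weights forward along a map `φ`. -/
lemma tupleSum_push {V J : Type} [Fintype V] [Fintype J] [DecidableEq J] (r : ℕ)
    (φ : V → J) (Q : Multiset J → Prop) (w : V → ℝ) :
    tupleSum r (fun s => Q (s.map φ)) w
      = tupleSum r Q (fun j => ∑ v ∈ Finset.univ.filter (fun v => φ v = j), w v) := by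
  classical
  unfold tupleSum
  rw [← Finset.sum_fiberwise (Finset.univ : Finset (Fin r → V)) (fun v => φ ∘ v)]
  refine Finset.sum_congr rfl fun u _ => ?_
  rw [Finset.prod_univ_sum]
  have hset : Finset.univ.filter (fun v : Fin r → V => φ ∘ v = u)
      = Fintype.piFinset (fun j => Finset.univ.filter (fun v => φ v = u j)) := by
    ext v
    simp [Fintype.mem_piFinset, funext_iff]
  rw [← hset]
  split_ifs with hQ
  · refine Finset.sum_congr rfl fun v hv => ?_
    rw [Finset.mem_filter] at hv
    simp only [Multiset.map_map]
    rw [hv.2, if_pos hQ]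
  · refine Finset.sum_eq_zero fun v hv => ?_
    rw [Finset.mem_filter] at hv
    simp only [Multiset.map_map]
    rw [hv.2, if_neg hQ]

/-- In a random map `c : V → J` with independent values of law `w`, the values at `r` distinct
points `σ j` are again `r` independent samples from `w`. -/
lemma tupleSum_marginal {V J : Type} [Fintype V] [DecidableEq V] [Fintype J] (r : ℕ)
    (σ : Fin r → V) (hσ : Function.Injective σ) (Q : Multiset J → Prop) [DecidablePred Q]
    (w : J → ℝ) (hw : ∑ j, w j = 1) :
    ∑ c : V → J, (if Q ((Finset.univ.val.map σ).map c) then ∏ v, w (c v) else 0)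
      = tupleSum r Q w := by
  classical
  unfold tupleSum
  rw [← Finset.sum_fiberwise (Finset.univ : Finset (V → J)) (fun c => c ∘ σ)]
  refine Finset.sum_congr rfl fun u _ => ?_
  have hset : Finset.univ.filter (fun c : V → J => c ∘ σ = u)
      = Fintype.piFinset (fun v => Finset.univ.filter (fun k => ∀ j, σ j = v → k = u j)) := by
    ext c
    simp only [Finset.mem_filter, Finset.mem_univ, true_and, Fintype.mem_piFinset, funext_iff,
      Function.comp_apply]
    exact ⟨fun h v j hj => hj ▸ h j, fun h j => h _ j rfl⟩
  have hsum : ∑ c ∈ Finset.univ.filter (fun c : V → J => c ∘ σ = u), ∏ v, w (c v)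
      = ∏ j, w (u j) := by
    rw [hset, ← Finset.prod_univ_sum (fun v => Finset.univ.filter
      (fun k => ∀ j, σ j = v → k = u j)) (fun _ k => w k)]
    rw [← Finset.prod_subset (Finset.subset_univ (Finset.univ.image σ)),
      Finset.prod_image (fun a _ b _ h => hσ h)]
    · refine Finset.prod_congr rfl fun j _ => ?_
      have : Finset.univ.filter (fun k => ∀ j', σ j' = σ j → k = u j') = {u j} := by
        ext k
        simp only [Finset.mem_filter, Finset.mem_univ, true_and, Finset.mem_singleton]
        exact ⟨fun h => h j rfl, fun h j' hj' => by rw [h, hσ hj']⟩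
      rw [this, Finset.sum_singleton]
    · intro v _ hv
      have : Finset.univ.filter (fun k => ∀ j', σ j' = v → k = u j') = Finset.univ := by
        ext k
        simp only [Finset.mem_filter, Finset.mem_univ, true_and, iff_true]
        intro j hj
        exact absurd (Finset.mem_image.2 ⟨j, Finset.mem_univ _, hj⟩) hv
      rw [this, hw]
  rw [← hsum]
  split_ifs with hQ
  · refine Finset.sum_congr rfl fun v hv => ?_
    rw [Finset.mem_filter] at hv
    rw [Multiset.map_map, hv.2, if_pos hQ]
  · refine Finset.sum_eq_zero fun v hv => ?_
    rw [Finset.mem_filter] at hv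
    rw [Multiset.map_map, hv.2, if_neg hQ]

lemma tupleSum_or_le {J : Type} [Fintype J] (r : ℕ) (A B : Multiset J → Prop) {w : J → ℝ}
    (hw : ∀ j, 0 ≤ w j) :
    tupleSum r (fun s => A s ∨ B s) w ≤ tupleSum r A w + tupleSum r B w := by
  classical
  unfold tupleSum
  rw [← Finset.sum_add_distrib]
  refine Finset.sum_le_sum fun u _ => ?_
  have hp : 0 ≤ ∏ j, w (u j) := Finset.prod_nonneg fun j _ => hw _
  by_cases hA : A (Finset.univ.val.map u) <;> by_cases hB : B (Finset.univ.val.map u) <;>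
    simp only [hA, hB, or_true, or_false, if_true, if_false, add_zero, zero_add,
      le_refl, le_add_iff_nonneg_right, hp]

lemma tupleSum_or_eq {J : Type} [Fintype J] (r : ℕ) (A B : Multiset J → Prop) (w : J → ℝ)
    (h : ∀ s, Multiset.card s = r → A s → ¬ B s) :
    tupleSum r (fun s => A s ∨ B s) w = tupleSum r A w + tupleSum r B w := by
  classical
  unfold tupleSum
  rw [← Finset.sum_add_distrib]
  refine Finset.sum_congr rfl fun u _ => ?_
  have hu := h (Finset.univ.val.map u) (by simp)
  by_cases hA : A (Finset.univ.val.map u) <;> by_cases hB : B (Finset.univ.val.map u)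
  · exact absurd hB (hu hA)
  all_goals simp only [hA, hB, or_true, or_false, if_true, if_false, add_zero, zero_add]

lemma tupleSum_and_forall {J : Type} [Fintype J] (r : ℕ) (p : J → Prop) [DecidablePred p]
    (B : Multiset J → Prop) (w : J → ℝ) :
    tupleSum r (fun s => (∀ j ∈ s, p j) ∧ B s) w
      = tupleSum r B (fun j => if p j then w j else 0) := by
  classical
  unfold tupleSum
  refine Finset.sum_congr rfl fun u _ => ?_
  have hiff : (∀ j ∈ Finset.univ.val.map u, p j) ↔ ∀ a, p (u a) := by
    constructor
    · intro h a; exact h _ (Multiset.mem_map_of_mem u (Finset.mem_univ a))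
    · intro h j hj
      obtain ⟨a, -, rfl⟩ := Multiset.mem_map.1 hj
      exact h a
  simp only [hiff]
  by_cases hp : ∀ a, p (u a)
  · simp only [hp, implies_true, true_and, if_true]
  · rw [if_neg (fun h => hp h.1)]
    push Not at hp
    obtain ⟨a, ha⟩ := hp
    have : ∏ j, (if p (u j) then w (u j) else 0) = 0 :=
      Finset.prod_eq_zero (Finset.mem_univ a) (if_neg ha)
    rw [this, ite_self]

lemma lagrangePoly_le_patternLagrangian {ι : Type} [Fintype ι] [DecidableEq ι] (r : ℕ)
    (E : Finset (Multiset ι)) {x : ι → ℝ} (hx : x ∈ stdSimplex ℝ ι) :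
    lagrangePoly r E x ≤ patternLagrangian r E :=
  le_csSup ((isCompact_stdSimplex ℝ ι).image (continuous_lagrangePoly r E)).bddAbove
    ⟨x, hx, rfl⟩

lemma filterMap_congr_mem {α β : Type} {f g : α → Option β} {s : Multiset α}
    (h : ∀ a ∈ s, f a = g a) : s.filterMap f = s.filterMap g := by
  induction s using Quotient.inductionOn with
  | h l => exact congrArg (fun l' : List β => (l' : Multiset β)) (List.filterMap_congr h)

lemma mem_subFamily {ι : Type} [DecidableEq ι] (E : Finset (Multiset ι)) (S : Finset ι)
    (e : Multiset {i : ι // i ∈ S}) : e ∈ subFamily E S ↔ e.map Subtype.val ∈ E := by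
  classical
  unfold subFamily
  simp only [Finset.mem_image, Finset.mem_filter]
  constructor
  · rintro ⟨e', ⟨he', hS⟩, rfl⟩
    rw [Multiset.map_filterMap]
    convert he'
    conv_rhs => rw [← Multiset.filterMap_some e']
    refine filterMap_congr_mem fun j hj => ?_
    simp [hS j hj]
  · intro h
    refine ⟨_, ⟨h, ?_⟩, ?_⟩
    · intro j hj
      obtain ⟨a, -, rfl⟩ := Multiset.mem_map.1 hj
      exact a.2
    · rw [Multiset.filterMap_map]
      conv_rhs => rw [← Multiset.filterMap_some e]
      refine filterMap_congr_mem fun j hj => ?_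
      simp

lemma lagrangePoly_subFamily {ι : Type} [Fintype ι] [DecidableEq ι] (r : ℕ)
    (E : Finset (Multiset ι)) (hE : ∀ e ∈ E, Multiset.card e = r) (S : Finset ι) (y : ι → ℝ)
    (hy : ∀ j, j ∉ S → y j = 0) :
    lagrangePoly r (subFamily E S) (fun j => y j.1) = lagrangePoly r E y := by
  classical
  rw [lagrangePoly_eq_tupleSum r E hE, lagrangePoly_eq_tupleSum]
  · simp only [mem_subFamily]
    rw [tupleSum_push r (Subtype.val : {i // i ∈ S} → ι) (· ∈ E)]
    congr 1
    funext j
    by_cases hj : j ∈ S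
    · have : Finset.univ.filter (fun v : {i // i ∈ S} => v.1 = j) = {⟨j, hj⟩} := by
        ext v; simp [Subtype.ext_iff]
      rw [this, Finset.sum_singleton]
    · rw [hy j hj]
      refine Finset.sum_eq_zero fun v hv => ?_
      rw [Finset.mem_filter] at hv
      exact absurd (hv.2 ▸ v.2) hj
  · intro e he
    rw [mem_subFamily] at he
    simpa using hE _ he

lemma restrict_mem_stdSimplex {ι : Type} [Fintype ι] [DecidableEq ι] {S : Finset ι} {y : ι → ℝ}
    (hy : y ∈ stdSimplex ℝ ι) (hS : ∀ j, j ∉ S → y j = 0) :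
    (fun j : {i // i ∈ S} => y j.1) ∈ stdSimplex ℝ {i // i ∈ S} := by
  refine ⟨fun j => hy.1 _, ?_⟩
  rw [← hy.2, Finset.sum_coe_sort S y]
  exact Finset.sum_subset (Finset.subset_univ _) fun j _ hj => hS j hj

lemma lagrangePoly_smul {ι : Type} [Fintype ι] [DecidableEq ι] (r : ℕ)
    (E : Finset (Multiset ι)) (hE : ∀ e ∈ E, Multiset.card e = r) (y : ι → ℝ) (s : ℝ) :
    lagrangePoly r E (fun j => s * y j) = s ^ r * lagrangePoly r E y := by
  rw [lagrangePoly_eq_tupleSum r E hE, lagrangePoly_eq_tupleSum r E hE, tupleSum_smul]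

/-- A homogeneous bound: an upper bound `α` for the Lagrangian of the subpattern on `S` controls
the Lagrange polynomial at every nonnegative weight supported on `S`. -/
lemma lagrangePoly_le_of_support {ι : Type} [Fintype ι] [DecidableEq ι] (r : ℕ) (hr : r ≠ 0)
    (E : Finset (Multiset ι)) (hE : ∀ e ∈ E, Multiset.card e = r) (S : Finset ι) (y : ι → ℝ)
    (hy0 : ∀ j, 0 ≤ y j) (hy : ∀ j, j ∉ S → y j = 0) (α : ℝ)
    (hα : patternLagrangian r (subFamily E S) ≤ α) :
    lagrangePoly r E y ≤ α * (∑ j, y j) ^ r := by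
  rcases (Finset.sum_nonneg fun j (_ : j ∈ Finset.univ) => hy0 j).eq_or_lt with h0 | hpos
  · have hz : y = fun j => 0 * y j := by
      funext j
      rw [zero_mul]
      exact (Finset.sum_eq_zero_iff_of_nonneg fun j _ => hy0 j).1 h0.symm j (Finset.mem_univ _)
    rw [hz, lagrangePoly_smul r E hE]
    simp [hr]
  · set s := ∑ j, y j
    have hyy : y = fun j => s * (s⁻¹ * y j) := by
      funext j; field_simp
    have hmem : (fun j => s⁻¹ * y j) ∈ stdSimplex ℝ ι := by
      refine ⟨fun j => mul_nonneg (by positivity) (hy0 j), ?_⟩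
      rw [← Finset.mul_sum]; exact inv_mul_cancel₀ hpos.ne'
    have hS : ∀ j, j ∉ S → s⁻¹ * y j = 0 := fun j hj => by rw [hy j hj, mul_zero]
    have h1 := lagrangePoly_le_patternLagrangian r (subFamily E S)
      (restrict_mem_stdSimplex hmem hS)
    rw [lagrangePoly_subFamily r E hE S _ hS] at h1
    rw [hyy, lagrangePoly_smul r E hE, mul_comm]
    have := h1.trans hα
    gcongr

/-! ### The union pattern -/

/-- Membership in the pattern obtained from `E` by blowing up the index `i` into a copy of `κ`
carrying `F`. The index set is `ι × κ`; the second coordinate matters only above `i`. -/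
def UnionProp {ι κ : Type} (E : Finset (Multiset ι)) (F : Finset (Multiset κ)) (i : ι)
    (s : Multiset (ι × κ)) : Prop :=
  s.map Prod.fst ∈ E ∨ ((∀ p ∈ s, p.1 = i) ∧ s.map Prod.snd ∈ F)

lemma tupleSum_fst {ι κ : Type} [Fintype ι] [Fintype κ] [DecidableEq ι] [DecidableEq κ] (r : ℕ)
    (E : Finset (Multiset ι)) (hE : ∀ e ∈ E, Multiset.card e = r) (w : ι × κ → ℝ) :
    tupleSum r (fun s => s.map Prod.fst ∈ E) w = lagrangePoly r E (fun j => ∑ k, w (j, k)) := by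
  classical
  rw [tupleSum_push r (Prod.fst : ι × κ → ι) (· ∈ E), lagrangePoly_eq_tupleSum r E hE]
  congr 1
  funext j
  rw [Finset.sum_filter, Fintype.sum_prod_type]
  rw [Finset.sum_eq_single j (fun b _ hb => by simp [hb]) (by simp)]
  simp

lemma tupleSum_snd {ι κ : Type} [Fintype ι] [Fintype κ] [DecidableEq ι] [DecidableEq κ] (r : ℕ)
    (F : Finset (Multiset κ)) (hF : ∀ e ∈ F, Multiset.card e = r) (i : ι) (w : ι × κ → ℝ) :
    tupleSum r (fun s => (∀ p ∈ s, p.1 = i) ∧ s.map Prod.snd ∈ F) w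
      = lagrangePoly r F (fun k => w (i, k)) := by
  classical
  rw [tupleSum_and_forall r (fun p : ι × κ => p.1 = i),
    tupleSum_push r (Prod.snd : ι × κ → κ) (· ∈ F), lagrangePoly_eq_tupleSum r F hF]
  congr 1
  funext k
  rw [Finset.sum_filter, Fintype.sum_prod_type]
  rw [Finset.sum_eq_single i (fun b _ hb => by simp [hb]) (by simp)]
  simp

lemma tupleSum_union_le {ι κ : Type} [Fintype ι] [Fintype κ] [DecidableEq ι] [DecidableEq κ]
    (r : ℕ) (E : Finset (Multiset ι)) (hE : ∀ e ∈ E, Multiset.card e = r)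
    (F : Finset (Multiset κ)) (hF : ∀ e ∈ F, Multiset.card e = r) (i : ι) (w : ι × κ → ℝ)
    (hw : ∀ p, 0 ≤ w p) :
    tupleSum r (UnionProp E F i) w
      ≤ lagrangePoly r E (fun j => ∑ k, w (j, k)) + lagrangePoly r F (fun k => w (i, k)) := by
  rw [← tupleSum_fst r E hE, ← tupleSum_snd r F hF]
  exact tupleSum_or_le r _ _ hw

/-- With product weights the Lagrange polynomial of the union is `λ_E(x) + λ_F(y) x_i ^ r`. The
two kinds of multisets are disjoint because the constant multiset at `i` is not in `E`. -/
lemma tupleSum_union_eq {ι κ : Type} [Fintype ι] [Fintype κ] [DecidableEq ι] [DecidableEq κ]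
    (r : ℕ) (E : Finset (Multiset ι)) (hE : ∀ e ∈ E, Multiset.card e = r)
    (F : Finset (Multiset κ)) (hF : ∀ e ∈ F, Multiset.card e = r) (i : ι)
    (hi : Multiset.replicate r i ∉ E) (x : ι → ℝ) (y : κ → ℝ) (hy : ∑ k, y k = 1) :
    tupleSum r (UnionProp E F i) (fun p => x p.1 * y p.2)
      = lagrangePoly r E x + lagrangePoly r F y * x i ^ r := by
  have h1 := tupleSum_fst r E hE (fun p : ι × κ => x p.1 * y p.2)
  have h2 := tupleSum_snd r F hF i (fun p : ι × κ => x p.1 * y p.2)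
  simp only [← Finset.mul_sum, hy, mul_one] at h1
  simp only [lagrangePoly_smul r F hF] at h2
  rw [mul_comm (lagrangePoly r F y), ← h1, ← h2]
  refine tupleSum_or_eq r _ _ _ ?_
  rintro s hs hA ⟨hB, -⟩
  apply hi
  have : s.map Prod.fst = Multiset.replicate r i := by
    rw [Multiset.eq_replicate]
    refine ⟨by simpa using hs, fun b hb => ?_⟩
    obtain ⟨p, hp, rfl⟩ := Multiset.mem_map.1 hb
    exact hB p hp
  rwa [← this]

/-! ### Edge counts in blow-ups -/

/-- First-moment argument: a random map `c : Fin N → J` with independent values of law `w` turns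
each `r`-set into a member of `Q` with probability `tupleSum r Q w`. -/
lemma exists_dense_blowup {J : Type} [Fintype J] (r N : ℕ) (Q : Multiset J → Prop)
    [DecidablePred Q] (w : J → ℝ) (hw0 : ∀ j, 0 ≤ w j) (hw : ∑ j, w j = 1) :
    ∃ c : Fin N → J, tupleSum r Q w * (N.choose r : ℝ) ≤
      (((Finset.univ : Finset (Fin N)).powersetCard r).filter
        (fun e => Q (e.val.map c))).card := by
  classical
  by_contra hcon
  push Not at hcon
  have htot : ∑ c : Fin N → J, ∏ v, w (c v) = 1 := by
    have := Finset.prod_univ_sum (fun _ : Fin N => (Finset.univ : Finset J)) (fun _ j => w j)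
    rw [Fintype.piFinset_univ] at this
    rw [← this, hw, Finset.prod_const_one]
  have hmean : ∑ c : Fin N → J, (∏ v, w (c v)) *
      ((((Finset.univ : Finset (Fin N)).powersetCard r).filter
        (fun e => Q (e.val.map c))).card : ℝ) = tupleSum r Q w * (N.choose r : ℝ) := by
    have h1 : ∀ c : Fin N → J, (∏ v, w (c v)) *
        ((((Finset.univ : Finset (Fin N)).powersetCard r).filter
          (fun e => Q (e.val.map c))).card : ℝ)
        = ∑ e ∈ (Finset.univ : Finset (Fin N)).powersetCard r,
          if Q (e.val.map c) then ∏ v, w (c v) else 0 := by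
      intro c
      rw [← Finset.sum_filter, Finset.sum_const, nsmul_eq_mul, mul_comm]
    rw [Finset.sum_congr rfl (fun c _ => h1 c), Finset.sum_comm]
    have h2 : ∀ e ∈ (Finset.univ : Finset (Fin N)).powersetCard r,
        ∑ c : Fin N → J, (if Q (e.val.map c) then ∏ v, w (c v) else 0) = tupleSum r Q w := by
      intro e he
      have hcard := (Finset.mem_powersetCard.1 he).2
      rw [← tupleSum_marginal r (e.orderEmbOfFin hcard) (e.orderEmbOfFin hcard).injective Q w hw]
      have : Finset.univ.val.map (e.orderEmbOfFin hcard) = e.val := by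
        have h3 := congrArg Finset.val (Finset.map_orderEmbOfFin_univ e hcard)
        rw [Finset.map_val] at h3
        exact h3
      rw [this]
    rw [Finset.sum_congr rfl h2, Finset.sum_const, Finset.card_powersetCard, nsmul_eq_mul,
      Finset.card_univ, Fintype.card_fin, mul_comm]
  have hlt : ∑ c : Fin N → J, (∏ v, w (c v)) *
      ((((Finset.univ : Finset (Fin N)).powersetCard r).filter
        (fun e => Q (e.val.map c))).card : ℝ)
      < ∑ c : Fin N → J, (∏ v, w (c v)) * (tupleSum r Q w * (N.choose r : ℝ)) := by
    have hnn : ∀ c : Fin N → J, 0 ≤ ∏ v, w (c v) := fun c =>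
      Finset.prod_nonneg fun v _ => hw0 _
    refine Finset.sum_lt_sum
      (fun c _ => mul_le_mul_of_nonneg_left (hcon c).le (hnn c)) ?_
    have : ∃ c ∈ (Finset.univ : Finset (Fin N → J)), ∏ v, w (c v) ≠ 0 := by
      apply Finset.exists_ne_zero_of_sum_ne_zero
      rw [htot]; exact one_ne_zero
    obtain ⟨c, -, hc⟩ := this
    exact ⟨c, Finset.mem_univ _,
      mul_lt_mul_of_pos_left (hcon c) (lt_of_le_of_ne (hnn c) (Ne.symm hc))⟩
  rw [hmean, ← Finset.sum_mul, htot, one_mul] at hlt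
  exact lt_irrefl _ hlt

/-- The edges of a blow-up inside `W` are counted, up to ordering, by the tuple sum at the vector
of part sizes of `W`. -/
lemma card_blowup_le {J : Type} [Fintype J] [DecidableEq J] (r N : ℕ) (Q : Multiset J → Prop)
    (c : Fin N → J) (W : Finset (Fin N)) (H : Finset (Finset (Fin N)))
    (hcard : ∀ e ∈ H, e.card = r) (hW : ∀ e ∈ H, e ⊆ W) (hQ : ∀ e ∈ H, Q (e.val.map c)) :
    (r.factorial : ℝ) * H.card
      ≤ tupleSum r Q (fun j => ((W.filter (fun v => c v = j)).card : ℝ)) := by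
  classical
  set w : Fin N → ℝ := fun v => if v ∈ W then 1 else 0
  have hH : ∀ e ∈ graphPattern H, Multiset.card e = r := by
    intro e he
    obtain ⟨e', he', rfl⟩ := Finset.mem_image.1 he
    exact hcard e' he'
  have h1 : lagrangePoly r (graphPattern H) w = r.factorial * H.card := by
    unfold lagrangePoly graphPattern
    rw [Finset.sum_image (fun a _ b _ h => Finset.val_injective h)]
    congr 1
    rw [Finset.sum_congr rfl (g := fun _ => (1 : ℝ)), Finset.sum_const, nsmul_eq_mul, mul_one]
    intro e he
    refine Finset.prod_eq_one fun v _ => ?_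
    by_cases hv : v ∈ e
    · have : Multiset.count v e.val = 1 := Multiset.count_eq_one_of_mem e.nodup hv
      simp [this, w, hW e he hv]
    · have : Multiset.count v e.val = 0 := Multiset.count_eq_zero_of_notMem hv
      simp [this]
  rw [← h1, lagrangePoly_eq_tupleSum r _ hH]
  have h2 := tupleSum_push r c Q w
  have h3 : (fun j => ∑ v ∈ Finset.univ.filter (fun v => c v = j), w v)
      = fun j => ((W.filter (fun v => c v = j)).card : ℝ) := by
    funext j
    simp only [w]
    rw [Finset.sum_boole, Finset.filter_filter]
    congr 2
    ext v; simp [and_comm]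
  rw [h3] at h2
  rw [← h2]
  refine tupleSum_mono r (fun v => by simp only [w]; split_ifs <;> simp) ?_
  intro u _ hu
  obtain ⟨e, he, heu⟩ := Finset.mem_image.1 hu
  show Q (Multiset.map c _)
  rw [← heu]
  exact hQ e he

/-! ### The generated non-jump -/

/-- A pattern of Lagrangian less than `1` contains no constant multiset. -/
lemma replicate_notMem {ι : Type} [Fintype ι] [DecidableEq ι] (r : ℕ)
    (E : Finset (Multiset ι)) (hE : ∀ e ∈ E, Multiset.card e = r)
    (hlt : patternLagrangian r E < 1) (i : ι) : Multiset.replicate r i ∉ E := by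
  classical
  intro hmem
  have h1 := lagrangePoly_le_patternLagrangian r E (single_mem_stdSimplex ℝ i)
  have hnn : ∀ j, 0 ≤ (Pi.single i 1 : ι → ℝ) j := fun j => (single_mem_stdSimplex ℝ i).1 j
  have hsub : ∀ e ∈ ({Multiset.replicate r i} : Finset (Multiset ι)), Multiset.card e = r := by
    intro e he
    rw [Finset.mem_singleton.1 he, Multiset.card_replicate]
  have h2 : lagrangePoly r {Multiset.replicate r i} (Pi.single i 1 : ι → ℝ)
      ≤ lagrangePoly r E (Pi.single i 1 : ι → ℝ) := by
    rw [lagrangePoly_eq_tupleSum r E hE, lagrangePoly_eq_tupleSum r _ hsub]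
    refine tupleSum_mono r hnn fun u _ hu => ?_
    rw [Finset.mem_singleton] at hu
    rwa [hu]
  have h3 : lagrangePoly r {Multiset.replicate r i} (Pi.single i 1 : ι → ℝ) = 1 := by
    unfold lagrangePoly
    rw [Finset.sum_singleton, Finset.prod_eq_single i]
    · simp [Nat.factorial_ne_zero]
    · intro j _ hj
      simp [Multiset.count_replicate, hj.symm]
    · simp
  linarith

/-- For a minimal pattern, any maximiser of `λ_E(x) + α x_i ^ r` charges the index `i`. -/
lemma maximiser_pos {ι : Type} [Fintype ι] [DecidableEq ι] (r : ℕ) (hr : r ≠ 0)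
    (E : Finset (Multiset ι)) (hE : ∀ e ∈ E, Multiset.card e = r)
    (hmin : IsMinimalPattern r E) (α : ℝ) (hα : 0 ≤ α) (i : ι) (x : ι → ℝ)
    (hx : x ∈ stdSimplex ℝ ι)
    (hmax : ∀ z ∈ stdSimplex ℝ ι,
      lagrangePoly r E z + α * z i ^ r ≤ lagrangePoly r E x + α * x i ^ r) : 0 < x i := by
  refine lt_of_le_of_ne (hx.1 i) fun h0 => ?_
  have hS : ∀ j, j ∉ Finset.univ.erase i → x j = 0 := by
    intro j hj
    have : j = i := by simpa using hj
    rw [this, ← h0]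
  have h1 := lagrangePoly_le_patternLagrangian r (subFamily E (Finset.univ.erase i))
    (restrict_mem_stdSimplex hx hS)
  rw [lagrangePoly_subFamily r E hE _ x hS] at h1
  have h2 : patternLagrangian r E ≤ lagrangePoly r E x := by
    refine csSup_le ⟨_, x, hx, rfl⟩ ?_
    rintro _ ⟨z, hz, rfl⟩
    have h3 := hmax z hz
    rw [← h0, zero_pow hr, mul_zero, add_zero] at h3
    have := mul_nonneg hα (pow_nonneg (hz.1 i) r)
    linarith
  exact absurd (hmin i) (not_lt.2 (h2.trans h1))

lemma exists_large_ratio (r : ℕ) (f c : ℝ) (hc : 0 < c) :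
    ∃ M : ℕ, r ≤ M ∧ 0 < M ∧
      f * (M : ℝ) ^ r < (f + c) * (r.factorial * (M.choose r : ℝ)) := by
  have h1 : Tendsto (fun M : ℕ => (f + c) * ((r.factorial * (M.choose r : ℝ)) / (M : ℝ) ^ r))
      atTop (𝓝 ((f + c) * 1)) := by
    refine Tendsto.const_mul _ ?_
    have h := isEquivalent_descFactorial r
    rw [Asymptotics.isEquivalent_iff_tendsto_one] at h
    · refine h.congr fun M => ?_
      simp only [Pi.div_apply]
      rw [Nat.descFactorial_eq_factorial_mul_choose]
      push_cast
      rfl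
    · filter_upwards [eventually_gt_atTop 0] with M hM
      positivity
  rw [mul_one] at h1
  have h2 := h1.eventually (lt_mem_nhds (show f < f + c by linarith))
  obtain ⟨M, hM1, hM2, hM3⟩ :=
    (h2.and ((eventually_ge_atTop r).and (eventually_gt_atTop 0))).exists
  refine ⟨M, hM2, hM3, ?_⟩
  have hpos : (0 : ℝ) < (M : ℝ) ^ r := by positivity
  rwa [← mul_div_assoc, lt_div_iff₀ hpos] at hM1

/-- if `α` is given by a non-jump sequence of `r`-graphs (the Frankl–Rödl
method) and `P = (m, 𝓔)` is a minimal `r`-pattern with `λ(P) < 1`, then for every `i ∈ [m]`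
the number `f_i(α) = max { λ_𝓔(x) + α·x_i^r : x ∈ Δ_{m−1} }` is a non-jump for `r`. -/
theorem generated_nonjump (r : ℕ) (hr : 3 ≤ r) (α : ℝ) (hα : α ∈ Set.Icc (0:ℝ) 1)
    (n : ℕ → ℕ) (G : ∀ t, Finset (Finset (Fin (n t))))
    (hG : ∀ t, ∀ e ∈ G t, e.card = r)
    (hnj : IsNonJumpSeq r α (fun t => Fin (n t)) (fun t => graphPattern (G t)))
    (m : ℕ) (E : Finset (Multiset (Fin m))) (hE : ∀ e ∈ E, Multiset.card e = r)
    (hmin : IsMinimalPattern r E) (hlt : patternLagrangian r E < 1)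
    (i : Fin m) :
    ¬ IsJump r
      (sSup ((fun x : Fin m → ℝ =>
        lagrangePoly r E x + α * x i ^ r) '' stdSimplex ℝ (Fin m))) := by
  classical
  have hr0 : r ≠ 0 := by omega
  set f : ℝ := sSup ((fun x : Fin m → ℝ =>
    lagrangePoly r E x + α * x i ^ r) '' stdSimplex ℝ (Fin m)) with hf
  have hcont : Continuous (fun x : Fin m → ℝ => lagrangePoly r E x + α * x i ^ r) :=
    (continuous_lagrangePoly r E).add (by fun_prop)
  have hcomp := (isCompact_stdSimplex ℝ (Fin m)).image hcont
  have hle : ∀ z ∈ stdSimplex ℝ (Fin m), lagrangePoly r E z + α * z i ^ r ≤ f := fun z hz =>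
    le_csSup hcomp.bddAbove ⟨z, hz, rfl⟩
  obtain ⟨x, hx, hxf⟩ := hcomp.sSup_mem ⟨_, _, single_mem_stdSimplex ℝ i, rfl⟩
  have hxf : lagrangePoly r E x + α * x i ^ r = f := hxf
  have hxi : 0 < x i := maximiser_pos r hr0 E hE hmin α hα.1 i x hx
    (fun z hz => hxf ▸ hle z hz)
  have hrep := replicate_notMem r E hE hlt i
  rintro ⟨c, hc, hjump⟩
  obtain ⟨M, hrM, hM0, hM⟩ := exists_large_ratio r f c hc
  -- `t` lies in the tail for every subset size from `1` to `M`
  choose! t₀ ht₀ using hnj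
  set t := (Finset.Icc 1 M).sup t₀ with ht
  have htail : ∀ k, 0 < k → k ≤ M → t₀ k ≤ t := fun k h1 h2 =>
    Finset.le_sup (f := t₀) (Finset.mem_Icc.2 ⟨h1, h2⟩)
  have hsmall : ∀ S : Finset (Fin (n t)), S.card ≤ M →
      patternLagrangian r (subFamily (graphPattern (G t)) S) ≤ α := by
    intro S hS
    rcases Nat.eq_zero_or_pos S.card with h0 | hpos
    · have hemp : IsEmpty {j // j ∈ S} := by
        rw [Finset.card_eq_zero.1 h0]; infer_instance
      unfold patternLagrangian
      rw [stdSimplex_of_isEmpty_index, Set.image_empty, Real.sSup_empty]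
      exact hα.1
    · obtain ⟨ε, -, -, -, h⟩ := ht₀ S.card hpos
      exact h t (htail _ hpos hS) S rfl
  have hbig : α < patternLagrangian r (graphPattern (G t)) := by
    obtain ⟨ε, hε, -, h, -⟩ := ht₀ M hM0
    have h1 := hε t (htail _ hM0 le_rfl)
    have h2 := h t (htail _ hM0 le_rfl)
    linarith
  have hF : ∀ e ∈ graphPattern (G t), Multiset.card e = r := by
    intro e he
    obtain ⟨e', he', rfl⟩ := Finset.mem_image.1 he
    exact hG t e' he'
  obtain ⟨y, hy, hyα⟩ : ∃ y ∈ stdSimplex ℝ (Fin (n t)),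
      α < lagrangePoly r (graphPattern (G t)) y := by
    have hne : (lagrangePoly r (graphPattern (G t)) '' stdSimplex ℝ (Fin (n t))).Nonempty := by
      rw [Set.nonempty_iff_ne_empty]
      intro h
      unfold patternLagrangian at hbig
      rw [h, Real.sSup_empty] at hbig
      exact absurd hα.1 (not_le.2 hbig)
    obtain ⟨_, ⟨y, hy, rfl⟩, h⟩ := exists_lt_of_lt_csSup hne hbig
    exact ⟨y, hy, h⟩
  set β := lagrangePoly r (graphPattern (G t)) y
  set Q : Multiset (Fin m × Fin (n t)) → Prop := UnionProp E (graphPattern (G t)) i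
  have hT := tupleSum_union_eq r E hE (graphPattern (G t)) hF i hrep x y hy.2
  have hgain : 0 < (β - α) * x i ^ r := mul_pos (by linarith) (pow_pos hxi r)
  obtain ⟨n₀, hn₀⟩ := hjump ((β - α) * x i ^ r) hgain M hrM
  set N := max n₀ r
  obtain ⟨col, hcol⟩ := exists_dense_blowup r N Q (fun p => x p.1 * y p.2)
    (fun p => mul_nonneg (hx.1 _) (hy.1 _)) (by
      rw [Fintype.sum_prod_type]
      simp only [← Finset.mul_sum, hy.2, mul_one]
      exact hx.2)
  have hNpos : (0 : ℝ) < N.choose r := by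
    exact_mod_cast Nat.choose_pos (le_max_right n₀ r)
  obtain ⟨W, hWM, H, hHG, hHW, hHd⟩ := hn₀ N (le_max_left _ _)
    (((Finset.univ : Finset (Fin N)).powersetCard r).filter (fun e => Q (e.val.map col)))
    (fun e he => (Finset.mem_powersetCard.1 (Finset.mem_filter.1 he).1).2) (by
      rw [le_div_iff₀ hNpos]
      refine le_trans (le_of_eq ?_) hcol
      rw [hT, ← hxf]
      ring)
  -- the part sizes of `W`, viewed as weights on the union index set
  set w : Fin m × Fin (n t) → ℝ := fun p => ((W.filter (fun v => col v = p)).card : ℝ)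
  have hw0 : ∀ p, 0 ≤ w p := fun p => Nat.cast_nonneg _
  have hwM : ∑ p, w p = M := by
    rw [← hWM, Finset.card_eq_sum_card_fiberwise (f := col) (t := Finset.univ)
      (fun _ _ => Finset.mem_coe.2 (Finset.mem_univ _))]
    push_cast
    rfl
  have hup := card_blowup_le r N Q col W H
    (fun e he => (Finset.mem_powersetCard.1 (Finset.mem_filter.1 (hHG he)).1).2) hHW
    (fun e he => (Finset.mem_filter.1 (hHG he)).2)
  have hun := tupleSum_union_le r E hE (graphPattern (G t)) hF i w hw0
  -- `W` meets at most `M` of the parts above `i`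
  have hG1 := lagrangePoly_le_of_support r hr0 (graphPattern (G t)) hF
    (W.image (fun v => (col v).2)) (fun k => w (i, k)) (fun k => hw0 _) (by
      intro k hk
      simp only [w, Nat.cast_eq_zero, Finset.card_eq_zero]
      refine Finset.filter_eq_empty_iff.2 fun v hv hvk => hk ?_
      exact Finset.mem_image.2 ⟨v, hv, by rw [hvk]⟩) α
    (hsmall _ (Finset.card_image_le.trans hWM.le))
  set z : Fin m → ℝ := fun j => ∑ k, w (j, k)
  have hzM : ∑ j, z j = M := by rw [← hwM, Fintype.sum_prod_type]
  have hMpos : (0 : ℝ) < M := by exact_mod_cast hM0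
  have hzf : lagrangePoly r E z + α * z i ^ r ≤ f * (M : ℝ) ^ r := by
    have hmem : (fun j => (M : ℝ)⁻¹ * z j) ∈ stdSimplex ℝ (Fin m) := by
      refine ⟨fun j => mul_nonneg (by positivity) (Finset.sum_nonneg fun k _ => hw0 _), ?_⟩
      rw [← Finset.mul_sum, hzM]
      exact inv_mul_cancel₀ hMpos.ne'
    have h := hle _ hmem
    simp only [lagrangePoly_smul r E hE, mul_pow, inv_pow] at h
    have hp : (0 : ℝ) < (M : ℝ) ^ r := by positivity
    calc lagrangePoly r E z + α * z i ^ r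
        = (((M : ℝ) ^ r)⁻¹ * lagrangePoly r E z + α * (((M : ℝ) ^ r)⁻¹ * z i ^ r))
            * (M : ℝ) ^ r := by field_simp
      _ ≤ f * (M : ℝ) ^ r := mul_le_mul_of_nonneg_right h hp.le
  have hCM : (0 : ℝ) < M.choose r := by exact_mod_cast Nat.choose_pos hrM
  rw [le_div_iff₀ hCM] at hHd
  have hfac : (0 : ℝ) < r.factorial := by positivity
  have hfin : (f + c) * (r.factorial * (M.choose r : ℝ)) ≤ r.factorial * H.card := by
    calc (f + c) * (r.factorial * (M.choose r : ℝ))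
        = r.factorial * ((f + c) * (M.choose r : ℝ)) := by ring
      _ ≤ _ := mul_le_mul_of_nonneg_left hHd hfac.le
  linarith
end
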